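/- arXiv:1410.5115 — 6 statements merged into one kernel-verified Lean document; each statement's English description precedes it below -/
import Mathlib

section
/- Let n ≥ 1. Suppose that to every affinely independent tuple Δ = (V_0, …, V_n) of n+1 points of ℝⁿ a point C(Δ) ∈ ℝⁿ is assigned such that: (1) for every similarity f of ℝⁿ (a map for which there exists r > 0 with dist(f(x), f(y)) = r·dist(x, y) for all x, y; both orientation-preserving and orientation-reversing similarities are allowed), one has C(f(V_0), …, f(V_n)) = f(C(V_0, …, V_n)); (2) C is invariant under permutations of the vertices V_0, …, V_n; (3) there exist polynomials P_1, …, P_n in the n(n+1) coordinates of the vertices such that for every affinely independent tuple Δ, the ℓ-th coordinate of Vol(Δ)·C(Δ) equals P_ℓ evaluated at the coordinates of the vertices, where Vol(Δ) is the signed volume (1/n!)·det(V_1 − V_0, …, V_n − V_0). Then there exists a constant t ∈ ℝ, depending only on C and not on Δ, such that for every affinely independent tuple Δ one has C(Δ) = t·CM(Δ) + (1 − t)·CC(Δ), where CM(Δ) is the centroid of the vertices and CC(Δ) is the circumcenter of the simplex Δ. -/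
/-- The signed volume of the simplex with vertices `W 0, …, W n` in `ℝⁿ`:
`(1/n!) · det(W 1 − W 0, …, W n − W 0)`. -/
noncomputable def signedVol (n : ℕ) (W : Fin (n+1) → EuclideanSpace ℝ (Fin n)) : ℝ :=
  (Matrix.of fun r c : Fin n => (W c.succ - W 0) r).det / n.factorial

/-!
Put one vertex at the origin, so that the center becomes an isometry-equivariant function `C` of the
edge vectors `v`. The polynomial `det v * ⟪C v, v i⟫` vanishes on degenerate frames: such a frame is
fixed by a reflection, under which the polynomial changes sign. The determinant is an irreducible
polynomial, hence divides this one, so `⟪C v, v i⟫` is itself a polynomial. It is homogeneous of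
degree two and invariant under isometries, hence a linear combination of the inner products
`⟪v j, v k⟫`. Therefore the difference of the squared distances from the center to two vertices is
a fixed linear function of the squared edge lengths. Invariance under permutations of the vertices
cuts the coefficients of this function down to one parameter, and the points
`t • centroid + (1 - t) • circumcenter` realize every value of that parameter.
-/

section LinearInOneVariable

open MvPolynomial

variable {σ R K : Type*}

lemma eval_update_of_mem_supported [CommSemiring R] [DecidableEq σ] {p : MvPolynomial σ R} {i : σ}
    (hp : p ∈ supported R {i}ᶜ) (y : σ → R) (t : R) :
    eval (Function.update y i t) p = eval y p := by
  refine eval₂Hom_congr' rfl (fun j hj _ => ?_) rfl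
  exact Function.update_of_ne (mem_supported.1 hp hj) t y

lemma exists_pow_mul_eq_mul_add_mem_supported [CommRing R] {m c : MvPolynomial σ R} {i : σ}
    (hm : m ∈ supported R {i}ᶜ) (hc : c ∈ supported R {i}ᶜ) (f : MvPolynomial σ R) :
    ∃ (d : ℕ) (q : MvPolynomial σ R), ∃ r ∈ supported R {i}ᶜ,
      m ^ d * f = (m * X i + c) * q + r := by
  induction f using MvPolynomial.induction_on with
  | C a => exact ⟨0, 0, C a, (supported R {i}ᶜ).algebraMap_mem a, by ring⟩
  | add f g hf hg =>
    obtain ⟨d, q, r, hr, hf⟩ := hf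
    obtain ⟨e, s, t, ht, hg⟩ := hg
    refine ⟨d + e, m ^ e * q + m ^ d * s, m ^ e * r + m ^ d * t,
      add_mem (mul_mem (pow_mem hm e) hr) (mul_mem (pow_mem hm d) ht), ?_⟩
    linear_combination m ^ e * hf + m ^ d * hg
  | mul_X f j hf =>
    obtain ⟨d, q, r, hr, hf⟩ := hf
    rcases eq_or_ne j i with rfl | hji
    · exact ⟨d + 1, m * X j * q + r, -(c * r), neg_mem (mul_mem hc hr),
        by linear_combination m * X j * hf⟩
    · exact ⟨d, q * X j, r * X j, mul_mem hr (Algebra.subset_adjoin ⟨j, hji, rfl⟩),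
        by linear_combination X j * hf⟩

theorem dvd_of_forall_eval_eq_zero [Field K] [Infinite K] {m c : MvPolynomial σ K} {i : σ}
    (hm : m ∈ supported K {i}ᶜ) (hc : c ∈ supported K {i}ᶜ) (hm0 : m ≠ 0)
    (hirr : Irreducible (m * X i + c)) {f : MvPolynomial σ K}
    (hf : ∀ y, eval y (m * X i + c) = 0 → eval y f = 0) : m * X i + c ∣ f := by
  classical
  have exists_zero (y : σ → K) (hy : eval y m ≠ 0) :
      ∃ t, eval (Function.update y i t) (m * X i + c) = 0 := by
    refine ⟨-eval y c / eval y m, ?_⟩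
    simp only [map_add, map_mul, eval_X, Function.update_self, eval_update_of_mem_supported hm,
      eval_update_of_mem_supported hc]
    field_simp
    ring
  have eq_zero_of_supported (r : MvPolynomial σ K) (hr : r ∈ supported K {i}ᶜ)
      (h : ∀ y, eval y (m * X i + c) = 0 → eval y r = 0) : r = 0 := by
    refine (mul_eq_zero.1 (MvPolynomial.funext fun y => ?_ : m * r = 0)).resolve_left hm0
    rcases eq_or_ne (eval y m) 0 with hy | hy
    · simp [hy]
    · obtain ⟨t, ht⟩ := exists_zero y hy
      have := h _ ht
      rw [eval_update_of_mem_supported hr] at this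
      simp [this]
  obtain ⟨d, q, r, hr, hdiv⟩ := exists_pow_mul_eq_mul_add_mem_supported hm hc f
  have hr0 : r = 0 := eq_zero_of_supported r hr fun y hy => by
    have := congrArg (eval y) hdiv
    simpa only [map_add, map_mul (eval y) (m * X i + c), hy, map_mul, hf y hy, mul_zero,
      zero_mul, zero_add, eq_comm] using this
  have not_dvd : ¬ m * X i + c ∣ m := fun ⟨k, hk⟩ =>
    hm0 <| eq_zero_of_supported m hm fun y hy => by rw [hk, map_mul, hy, zero_mul]
  refine (hirr.prime.dvd_or_dvd ⟨q, by rw [hdiv, hr0, add_zero]⟩).resolve_left fun h => ?_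
  exact not_dvd (hirr.prime.dvd_of_dvd_pow h)

end LinearInOneVariable

section Determinant

open MvPolynomial Matrix

variable (R : Type*) [CommRing R]

lemma irreducible_rename {σ τ R : Type*} [CommRing R] [IsDomain R] [UniqueFactorizationMonoid R]
    {f : σ → τ} (hf : Function.Injective f) {p : MvPolynomial σ R} (hp : Irreducible p) :
    Irreducible (rename f p) := by
  let e := renameEquiv R (Equiv.ofInjective f hf)
  have h : rename f p = rename Subtype.val (e p) := by
    rw [renameEquiv_apply, rename_rename]
    rfl
  rw [h]
  exact ((prime_rename_iff _).2 (hp.map e).prime).irreducible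

lemma det_submatrix_succ_mvPolynomialX (n : ℕ) :
    ((mvPolynomialX (Fin (n + 1)) (Fin (n + 1)) R).submatrix Fin.succ Fin.succ).det =
      rename (Prod.map Fin.succ Fin.succ) (mvPolynomialX (Fin n) (Fin n) R).det := by
  rw [AlgHom.map_det]
  congr 1
  ext i j : 1
  simp

lemma det_submatrix_mvPolynomialX_mem_supported {m n : Type*} [Fintype m] [DecidableEq m]
    {s : Set (n × n)} {f g : m → n} (h : ∀ i j, (f i, g j) ∈ s) :
    ((mvPolynomialX n n R).submatrix f g).det ∈ supported R s := by
  rw [det_apply]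
  refine sum_mem fun σ _ => zsmul_mem (prod_mem fun i _ => ?_) _
  exact Algebra.subset_adjoin ⟨_, h _ _, rfl⟩

lemma det_submatrix_succ_mvPolynomialX_mem_supported (n : ℕ) :
    ((mvPolynomialX (Fin (n + 1)) (Fin (n + 1)) R).submatrix Fin.succ Fin.succ).det ∈
      supported R {(0, 0)}ᶜ :=
  det_submatrix_mvPolynomialX_mem_supported R fun i j => by simp

lemma exists_det_mvPolynomialX_eq (n : ℕ) :
    ∃ c ∈ supported R {(0, 0)}ᶜ,
      (mvPolynomialX (Fin (n + 1)) (Fin (n + 1)) R).det =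
        ((mvPolynomialX (Fin (n + 1)) (Fin (n + 1)) R).submatrix Fin.succ Fin.succ).det *
          X (0, 0) + c := by
  refine ⟨_, ?_, by
    rw [det_succ_row_zero, Fin.sum_univ_succ, Fin.succAbove_zero, mvPolynomialX_apply]
    simp only [Fin.val_zero, pow_zero, one_mul]
    rw [mul_comm]⟩
  refine sum_mem fun j _ => mul_mem (mul_mem (pow_mem (neg_mem (one_mem _)) _) ?_) ?_
  · exact Algebra.subset_adjoin ⟨(0, j.succ), by simp, rfl⟩
  · exact det_submatrix_mvPolynomialX_mem_supported R fun i k => by simp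

lemma not_det_submatrix_succ_dvd_det_mvPolynomialX [Nontrivial R] (n : ℕ) :
    ¬ ((mvPolynomialX (Fin (n + 2)) (Fin (n + 2)) R).submatrix Fin.succ Fin.succ).det ∣
      (mvPolynomialX (Fin (n + 2)) (Fin (n + 2)) R).det := by
  intro h
  let A := (Equiv.swap (0 : Fin (n + 2)) 1).permMatrix R
  have hminor : eval (fun p => A p.1 p.2)
      ((mvPolynomialX _ _ R).submatrix Fin.succ Fin.succ).det = 0 := by
    rw [RingHom.map_det]
    refine det_eq_zero_of_row_eq_zero 0 fun j => ?_
    simpa [A, Equiv.Perm.permMatrix] using (Fin.succ_ne_zero j).symm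
  have hdet := map_dvd (eval fun p => A p.1 p.2) h
  rw [hminor, RingHom.map_det, mvPolynomialX_mapMatrix_eval, det_permutation,
    Equiv.Perm.sign_swap (Fin.zero_ne_one), zero_dvd_iff] at hdet
  simp at hdet

theorem irreducible_det_mvPolynomialX [IsDomain R] [UniqueFactorizationMonoid R] (n : ℕ) :
    Irreducible (mvPolynomialX (Fin (n + 1)) (Fin (n + 1)) R).det := by
  induction n with
  | zero =>
    rw [det_fin_one, mvPolynomialX_apply]
    exact irreducible_of_totalDegree_eq_one (totalDegree_X _) fun x hx =>
      isUnit_of_dvd_one (by simpa using hx (Finsupp.single (0, 0) 1))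
  | succ n ih =>
    obtain ⟨c, hc, hdet⟩ := exists_det_mvPolynomialX_eq R (n + 1)
    have hminor := irreducible_rename ((Fin.succ_injective (n + 1)).prodMap
      (Fin.succ_injective (n + 1))) ih
    rw [← det_submatrix_succ_mvPolynomialX] at hminor
    have hsupp := det_submatrix_succ_mvPolynomialX_mem_supported R (n + 1)
    rw [hdet]
    refine irreducible_mul_X_add _ c _ hminor.ne_zero (fun h => mem_supported.1 hsupp h rfl)
      (fun h => mem_supported.1 hc h rfl) (hminor.isRelPrime_iff_not_dvd.2 fun h => ?_)
    refine not_det_submatrix_succ_dvd_det_mvPolynomialX R n ?_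
    exact hdet ▸ dvd_add (dvd_mul_right _ _) h

theorem det_mvPolynomialX_dvd {K : Type*} [Field K] [Infinite K] {n : ℕ}
    {f : MvPolynomial (Fin n × Fin n) K}
    (hf : ∀ A : Matrix (Fin n) (Fin n) K, A.det = 0 → eval (fun p => A p.1 p.2) f = 0) :
    (mvPolynomialX (Fin n) (Fin n) K).det ∣ f := by
  rcases n with _ | n
  · rw [det_fin_zero]
    exact one_dvd f
  obtain ⟨c, hc, hdet⟩ := exists_det_mvPolynomialX_eq K n
  have hirr := irreducible_det_mvPolynomialX K n
  have hminor : ((mvPolynomialX (Fin (n + 1)) (Fin (n + 1)) K).submatrix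
      Fin.succ Fin.succ).det ≠ 0 := by
    rw [det_submatrix_succ_mvPolynomialX]
    exact (map_ne_zero_iff _ (rename_injective _
      ((Fin.succ_injective n).prodMap (Fin.succ_injective n)))).2 (det_mvPolynomialX_ne_zero _ _)
  have hsupp := det_submatrix_succ_mvPolynomialX_mem_supported K n
  have hzero (y : Fin (n + 1) × Fin (n + 1) → K)
      (hy : eval y (mvPolynomialX (Fin (n + 1)) (Fin (n + 1)) K).det = 0) : eval y f = 0 :=
    hf (of fun i j => y (i, j)) (by rwa [eval_det_mvPolynomialX] at hy)
  rw [hdet] at hirr hzero ⊢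
  exact dvd_of_forall_eval_eq_zero hsupp hc hminor hirr hzero

end Determinant

section Homogeneous

open MvPolynomial

theorem dense_setOf_eval_ne_zero {ι : Type*} [Finite ι] {p : MvPolynomial ι ℝ} (hp : p ≠ 0) :
    Dense {x : ι → ℝ | eval x p ≠ 0} := by
  cases nonempty_fintype ι
  refine Metric.dense_iff.2 fun x ε hε => ?_
  by_contra h
  refine hp (MvPolynomial.funext_set (fun i => Metric.ball (x i) ε) (fun i => ?_) fun y hy => ?_)
  · rw [Real.ball_eq_Ioo]
    exact Set.Ioo_infinite (by linarith)
  · rw [← ball_pi x hε] at hy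
    rw [map_zero]
    exact of_not_not fun hy0 => h ⟨y, hy, hy0⟩

lemma coeff_bind₁_C_mul_X {ι R : Type*} [CommSemiring R] (s : R) (p : MvPolynomial ι R)
    (m : ι →₀ ℕ) : coeff m (bind₁ (fun i => C s * X i) p) = s ^ m.degree * coeff m p := by
  classical
  induction p using MvPolynomial.induction_on' with
  | monomial u a =>
    have : bind₁ (fun i => C s * X i) (monomial u a) = C (s ^ u.degree) * monomial u a := by
      rw [bind₁_monomial, monomial_eq, Finsupp.prod, Finsupp.degree_apply]
      simp only [mul_pow, Finset.prod_mul_distrib, Finset.prod_pow_eq_pow_sum, C_pow]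
      ring
    rw [this, coeff_C_mul, coeff_monomial]
    split_ifs with h
    · rw [h]
    · simp
  | add p q hp hq => rw [map_add, coeff_add, coeff_add, hp, hq, mul_add]

theorem isHomogeneous_of_eval_smul {ι K : Type*} [CommRing K] [IsDomain K] [Infinite K]
    {p : MvPolynomial ι K} {s : K} {d : ℕ} (hs : Function.Injective (s ^ · : ℕ → K))
    (h : ∀ x, eval (s • x) p = s ^ d * eval x p) : p.IsHomogeneous d := by
  have hp : bind₁ (fun i => C s * X i) p = C (s ^ d) * p := MvPolynomial.funext fun x => by
    rw [map_mul, eval_C, ← h, ← aeval_eq_eval, ← aeval_eq_eval, aeval_bind₁]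
    simp [Pi.smul_def]
  intro m hm
  have := congrArg (coeff m) hp
  rw [coeff_bind₁_C_mul_X, coeff_C_mul] at this
  exact (DFunLike.congr_fun Finsupp.degree_eq_weight_one m).symm.trans
    (hs (mul_right_cancel₀ hm this))

lemma exists_linearMap_eq_eval {ι R : Type*} [Finite ι] [CommSemiring R]
    {p : MvPolynomial ι R} (hp : p.IsHomogeneous 1) :
    ∃ f : (ι → R) →ₗ[R] R, ∀ x, f x = eval x p := by
  cases nonempty_fintype ι
  refine ⟨∑ i, coeff 0 (pderiv i p) • LinearMap.proj i, fun x => ?_⟩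
  have hC (i : ι) : pderiv i p = C (coeff 0 (pderiv i p)) :=
    totalDegree_eq_zero_iff_eq_C.1 ((totalDegree_zero_iff_isHomogeneous ι).2 hp.pderiv)
  have := congrArg (eval x) hp.sum_X_mul_pderiv
  simp only [map_sum, map_mul, eval_X, one_nsmul] at this
  rw [← this, LinearMap.sum_apply]
  refine Finset.sum_congr rfl fun i _ => ?_
  conv_rhs => rw [hC i, eval_C, mul_comm]
  rfl

theorem exists_quadraticForm_eq_eval {ι K : Type*} [Finite ι] [Field K] [NeZero (2 : K)]
    {p : MvPolynomial ι K} (hp : p.IsHomogeneous 2) :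
    ∃ Q : QuadraticForm K (ι → K), ∀ x, Q x = eval x p := by
  cases nonempty_fintype ι
  choose f hf using fun i => exists_linearMap_eq_eval (hp.pderiv (i := i))
  refine ⟨(2⁻¹ : K) • ∑ i, QuadraticMap.linMulLin (LinearMap.proj i) (f i), fun x => ?_⟩
  have := congrArg (eval x) hp.sum_X_mul_pderiv
  simp only [map_sum, map_mul, eval_X, ← hf, two_nsmul, map_add] at this
  simp [this, ← two_mul, two_ne_zero]

end Homogeneous

section Isometry

open scoped RealInnerProductSpace

variable {E : Type*} [NormedAddCommGroup E] [InnerProductSpace ℝ E]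

theorem exists_eq_mul_inner_of_isometry_invariant {B : E →ₗ[ℝ] E →ₗ[ℝ] ℝ}
    (hB : ∀ (L : E ≃ₗᵢ[ℝ] E) x y, B (L x) (L y) = B x y) :
    ∃ c : ℝ, ∀ x y, B x y = c * ⟪x, y⟫ := by
  have orthogonal {x y : E} (hxy : ⟪x, y⟫ = 0) : B x y = 0 := by
    have h := hB (ℝ ∙ x)ᗮ.reflection x y
    rw [Submodule.reflection_orthogonalComplement_singleton_eq_neg,
      Submodule.reflection_mem_subspace_eq_self
        (Submodule.mem_orthogonal_singleton_iff_inner_right.2 hxy),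
      map_neg, LinearMap.neg_apply] at h
    linarith
  have norm_eq {x y : E} (hxy : ‖x‖ = ‖y‖) : B x x = B y y := by
    rw [← hB (ℝ ∙ (x - y))ᗮ.reflection, Submodule.reflection_sub hxy]
  rcases subsingleton_or_nontrivial E with _ | _
  · exact ⟨0, fun x y => by simp [Subsingleton.elim x 0]⟩
  obtain ⟨e, he⟩ := exists_norm_eq E zero_le_one
  have diagonal (x : E) : B x x = B e e * ⟪x, x⟫ := by
    rw [norm_eq (y := ‖x‖ • e) (by simp [norm_smul, he]), real_inner_self_eq_norm_sq]
    simp only [map_smul, LinearMap.smul_apply, smul_eq_mul]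
    ring
  refine ⟨B e e, fun x y => ?_⟩
  rcases eq_or_ne x 0 with rfl | hx
  · simp
  have hx' : ⟪x, x⟫ ≠ 0 := inner_self_ne_zero.2 hx
  have hperp := orthogonal (x := x) (y := y - (⟪x, y⟫ / ⟪x, x⟫) • x) (by
    rw [inner_sub_right, real_inner_smul_right]; field_simp; ring)
  rw [map_sub, map_smul, diagonal, smul_eq_mul] at hperp
  field_simp at hperp
  linarith

theorem exists_eq_sum_mul_inner_of_isometry_invariant {ι : Type*} [Fintype ι]
    {Q : QuadraticForm ℝ (ι → E)} (hQ : ∀ (L : E ≃ₗᵢ[ℝ] E) v, Q (L ∘ v) = Q v) :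
    ∃ a : ι → ι → ℝ, ∀ v, Q v = ∑ j, ∑ k, a j k * ⟪v j, v k⟫ := by
  classical
  have polar_comp (L : E ≃ₗᵢ[ℝ] E) (v w : ι → E) :
      Q.polarBilin (L ∘ v) (L ∘ w) = Q.polarBilin v w := by
    have : L ∘ v + L ∘ w = L ∘ (v + w) := funext fun i => (map_add L _ _).symm
    simp only [QuadraticMap.polarBilin_apply_apply, QuadraticMap.polar, this, hQ]
  let single := LinearMap.single ℝ (fun _ : ι => E)
  have single_comp (L : E ≃ₗᵢ[ℝ] E) (i : ι) (x : E) : single i (L x) = L ∘ single i x :=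
    funext fun j => (Pi.apply_single (fun _ => L) (fun _ => map_zero L) i x j).symm
  choose a ha using fun j k => exists_eq_mul_inner_of_isometry_invariant
    (B := Q.polarBilin.compl₁₂ (single j) (single k)) fun L x y => by
      simp only [LinearMap.compl₁₂_apply, single_comp, polar_comp]
  have sum_single (v : ι → E) : ∑ i, single i (v i) = v := Finset.univ_sum_single v
  refine ⟨fun j k => a j k / 2, fun v => ?_⟩
  have hpolar : Q.polarBilin v v = ∑ j, ∑ k, a j k * ⟪v j, v k⟫ := by
    simp_rw [← ha, LinearMap.compl₁₂_apply, ← map_sum, sum_single, ← LinearMap.sum_apply,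
      ← map_sum, sum_single]
  rw [QuadraticMap.polarBilin_apply_apply, QuadraticMap.polar_self, two_nsmul, ← two_mul] at hpolar
  simp_rw [div_mul_eq_mul_div, ← Finset.sum_div, ← hpolar]
  ring

end Isometry

section Frames

open MvPolynomial Matrix
open scoped RealInnerProductSpace

lemma linearIndependent_isometry_comp {ι E : Type*} [NormedAddCommGroup E] [InnerProductSpace ℝ E]
    {v : ι → E} (hv : LinearIndependent ℝ v) (L : E ≃ₗᵢ[ℝ] E) : LinearIndependent ℝ (L ∘ v) :=
  hv.map' L.toLinearEquiv.toLinearMap L.toLinearEquiv.ker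

/-- Invariance under linear isometries, for a function whose values matter only on linearly
independent families. -/
def IsIsometryInvariant {ι E : Type*} [NormedAddCommGroup E] [InnerProductSpace ℝ E]
    (h : (ι → E) → ℝ) : Prop :=
  ∀ (L : E ≃ₗᵢ[ℝ] E) (v : ι → E), LinearIndependent ℝ v → h (L ∘ v) = h v

variable {n : ℕ}

/-- The entries of the matrix whose columns are the given vectors: the coordinates in which the
polynomials on tuples of vectors are written. -/
noncomputable def entries : (Fin n → EuclideanSpace ℝ (Fin n)) ≃ₗ[ℝ] (Fin n × Fin n → ℝ) where
  toFun v p := v p.2 p.1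
  invFun A j := WithLp.toLp 2 fun i => A (i, j)
  map_add' _ _ := rfl
  map_smul' _ _ := rfl
  left_inv _ := rfl
  right_inv _ := rfl

lemma entries_apply (v : Fin n → EuclideanSpace ℝ (Fin n)) (x : Fin n × Fin n) :
    entries v x = v x.2 x.1 :=
  rfl

lemma eval_entries_det_mvPolynomialX (v : Fin n → EuclideanSpace ℝ (Fin n)) :
    eval (entries v) (mvPolynomialX (Fin n) (Fin n) ℝ).det =
      (EuclideanSpace.basisFun (Fin n) ℝ).toBasis.det v := by
  rw [eval_det_mvPolynomialX, Module.Basis.det_apply]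
  rfl

lemma linearIndependent_iff_basisFun_det_ne_zero {v : Fin n → EuclideanSpace ℝ (Fin n)} :
    LinearIndependent ℝ v ↔ (EuclideanSpace.basisFun (Fin n) ℝ).toBasis.det v ≠ 0 := by
  rw [← isUnit_iff_ne_zero, ← Module.Basis.is_basis_iff_det]
  exact ⟨fun h => ⟨h, h.span_eq_top_of_card_eq_finrank' (by simp)⟩, And.left⟩

theorem dense_setOf_linearIndependent :
    Dense {v : Fin n → EuclideanSpace ℝ (Fin n) | LinearIndependent ℝ v} := by
  have h := (dense_setOf_eval_ne_zero (det_mvPolynomialX_ne_zero (Fin n) ℝ)).preimage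
    entries.toContinuousLinearEquiv.toHomeomorph.isOpenMap
  refine h.mono fun v hv => linearIndependent_iff_basisFun_det_ne_zero.2 ?_
  rwa [← eval_entries_det_mvPolynomialX]

lemma exists_isometry_comp_eq_self_and_det_comp_eq_neg
    {v : Fin n → EuclideanSpace ℝ (Fin n)} (hv : ¬ LinearIndependent ℝ v) :
    ∃ R : EuclideanSpace ℝ (Fin n) ≃ₗᵢ[ℝ] EuclideanSpace ℝ (Fin n), R ∘ v = v ∧
      ∀ w, (EuclideanSpace.basisFun (Fin n) ℝ).toBasis.det (R ∘ w) =
        -(EuclideanSpace.basisFun (Fin n) ℝ).toBasis.det w := by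
  have hspan : Submodule.span ℝ (Set.range v) ≠ ⊤ := fun htop =>
    hv (linearIndependent_of_top_le_span_of_card_eq_finrank htop.ge (by simp))
  obtain ⟨u, hu, hu0⟩ := Submodule.exists_mem_ne_zero_of_ne_bot
    (mt Submodule.orthogonal_eq_bot_iff.1 hspan)
  have hmem (i : Fin n) : v i ∈ (ℝ ∙ u)ᗮ :=
    Submodule.mem_orthogonal_singleton_iff_inner_left.2 <|
      Submodule.inner_right_of_mem_orthogonal (Submodule.subset_span (Set.mem_range_self i)) hu
  refine ⟨(ℝ ∙ u)ᗮ.reflection,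
    funext fun i => Submodule.reflection_mem_subspace_eq_self (hmem i), fun w => ?_⟩
  have h := (EuclideanSpace.basisFun (Fin n) ℝ).toBasis.det_comp
    (ℝ ∙ u)ᗮ.reflection.toLinearMap w
  rwa [Submodule.det_reflection, Submodule.orthogonal_orthogonal, finrank_span_singleton hu0,
    pow_one, neg_one_mul] at h

lemma eval_entries_comp_eq_mul {p : MvPolynomial (Fin n × Fin n) ℝ} {c : ℝ}
    {g : (Fin n → EuclideanSpace ℝ (Fin n)) → Fin n → EuclideanSpace ℝ (Fin n)} (hg : Continuous g)
    (h : ∀ v, LinearIndependent ℝ v → eval (entries (g v)) p = c * eval (entries v) p)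
    (v : Fin n → EuclideanSpace ℝ (Fin n)) : eval (entries (g v)) p = c * eval (entries v) p := by
  have hp : Continuous fun v => eval (entries v) p :=
    (continuous_eval p).comp entries.toLinearMap.continuous_of_finiteDimensional
  exact congrFun ((hp.comp hg).ext_on dense_setOf_linearIndependent (continuous_const.mul hp) h) v

variable {h : (Fin n → EuclideanSpace ℝ (Fin n)) → ℝ} {p : MvPolynomial (Fin n × Fin n) ℝ}

lemma eval_entries_eq_zero_of_not_linearIndependent
    (hiso : IsIsometryInvariant h)
    (hp : ∀ v, LinearIndependent ℝ v →
      (EuclideanSpace.basisFun (Fin n) ℝ).toBasis.det v * h v = eval (entries v) p)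
    {v : Fin n → EuclideanSpace ℝ (Fin n)} (hv : ¬ LinearIndependent ℝ v) :
    eval (entries v) p = 0 := by
  obtain ⟨R, hRv, hdet⟩ := exists_isometry_comp_eq_self_and_det_comp_eq_neg hv
  have hsign (w : Fin n → EuclideanSpace ℝ (Fin n)) (hw : LinearIndependent ℝ w) :
      eval (entries (R ∘ w)) p = -1 * eval (entries w) p := by
    rw [← hp w hw, ← hp _ (linearIndependent_isometry_comp hw R), hiso R w hw, hdet]
    ring
  have hneg := eval_entries_comp_eq_mul (g := (R ∘ ·)) (by fun_prop) hsign v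
  rw [hRv] at hneg
  linarith

theorem exists_eq_eval_of_basisFun_det_mul_eq_eval
    (hiso : IsIsometryInvariant h)
    (hp : ∀ v, LinearIndependent ℝ v →
      (EuclideanSpace.basisFun (Fin n) ℝ).toBasis.det v * h v = eval (entries v) p) :
    ∃ q : MvPolynomial (Fin n × Fin n) ℝ, ∀ v, LinearIndependent ℝ v →
      h v = eval (entries v) q := by
  obtain ⟨q, rfl⟩ := det_mvPolynomialX_dvd (f := p) fun A hA => by
    refine eval_entries_eq_zero_of_not_linearIndependent (v := entries.symm fun x => A x.1 x.2)
      hiso hp ?_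
    rw [linearIndependent_iff_basisFun_det_ne_zero, ← eval_entries_det_mvPolynomialX,
      LinearEquiv.apply_symm_apply, eval_det_mvPolynomialX, not_not]
    exact hA
  refine ⟨q, fun v hv => ?_⟩
  have := hp v hv
  rw [map_mul, eval_entries_det_mvPolynomialX] at this
  exact mul_left_cancel₀ (linearIndependent_iff_basisFun_det_ne_zero.1 hv) this

theorem exists_eq_sum_mul_inner_of_eq_eval
    (hiso : IsIsometryInvariant h)
    (hscale : ∀ s : ℝ, 0 < s → ∀ v, LinearIndependent ℝ v → h (s • v) = s ^ 2 * h v)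
    (hp : ∀ v, LinearIndependent ℝ v → h v = eval (entries v) p) :
    ∃ a : Fin n → Fin n → ℝ, ∀ v, LinearIndependent ℝ v →
      h v = ∑ j, ∑ k, a j k * ⟪v j, v k⟫ := by
  have hscale₂ := eval_entries_comp_eq_mul (p := p) (c := 2 ^ 2) (continuous_const_smul (2 : ℝ))
    fun v hv => by
      have hv₂ : LinearIndependent ℝ ((2 : ℝ) • v) :=
        hv.units_smul fun _ => Units.mk0 2 two_ne_zero
      rw [← hp v hv, ← hp _ hv₂, hscale 2 two_pos v hv]
  have hhom : p.IsHomogeneous 2 := by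
    refine isHomogeneous_of_eval_smul (pow_right_injective₀ two_pos (by norm_num)) fun x => ?_
    simpa only [map_smul, LinearEquiv.apply_symm_apply] using hscale₂ (entries.symm x)
  obtain ⟨Q, hQ⟩ := exists_quadraticForm_eq_eval hhom
  have hQiso (L : EuclideanSpace ℝ (Fin n) ≃ₗᵢ[ℝ] EuclideanSpace ℝ (Fin n))
      (v : Fin n → EuclideanSpace ℝ (Fin n)) : Q (entries (L ∘ v)) = Q (entries v) := by
    rw [hQ, hQ, ← one_mul (eval (entries v) p)]
    refine eval_entries_comp_eq_mul (g := fun v => L ∘ v) (by fun_prop) (fun v hv => ?_) v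
    rw [← hp v hv, ← hp _ (linearIndependent_isometry_comp hv L), hiso L v hv, one_mul]
  obtain ⟨a, ha⟩ := exists_eq_sum_mul_inner_of_isometry_invariant
    (Q := Q.comp entries.toLinearMap) hQiso
  refine ⟨a, fun v hv => ?_⟩
  rw [hp v hv, ← ha v, ← hQ]
  rfl

end Frames

section Symmetrization

open Equiv Finset

variable {ι 𝕜 : Type*}

theorem card_mul_sum_mul_eq_of_forall_swap [DecidableEq ι] [Field 𝕜] [LinearOrder 𝕜]
    [IsStrictOrderedRing 𝕜] {s : Finset ι} {f g : ι → 𝕜}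
    (h : ∀ a ∈ s, ∀ b ∈ s, ∑ k ∈ s, f k * g (swap a b k) = ∑ k ∈ s, f k * g k) :
    #s * ∑ k ∈ s, f k * g k = (∑ k ∈ s, f k) * ∑ k ∈ s, g k := by
  have mul_sub_eq_zero (a) (ha : a ∈ s) (b) (hb : b ∈ s) : (f a - f b) * (g a - g b) = 0 := by
    rcases eq_or_ne a b with rfl | hab
    · rw [sub_self, zero_mul]
    have hswap := h a ha b hb
    rw [← sub_eq_zero, ← sum_sub_distrib, sum_eq_add_of_mem a b ha hb hab fun k _ hk => by
      rw [swap_apply_of_ne_of_ne hk.1 hk.2, sub_self], swap_apply_left, swap_apply_right] at hswap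
    linear_combination -hswap
  -- `f` and `g` both monovary and antivary, so both Chebyshev sum inequalities apply.
  have hmono : MonovaryOn f g s :=
    monovaryOn_iff_forall_mul_nonneg.2 fun a ha b hb => (mul_sub_eq_zero b hb a ha).ge
  have hanti : AntivaryOn f g s :=
    antivaryOn_iff_forall_mul_nonpos.2 fun a ha b hb => (mul_sub_eq_zero b hb a ha).le
  exact le_antisymm hanti.card_mul_sum_le_sum_mul_sum hmono.sum_mul_sum_le_card_mul_sum

/-- The symmetric matrix `e_ik + e_ki - e_jk - e_kj`. These are the directions in which a symmetric
matrix with zero diagonal changes when the indices `i` and `j` are swapped. -/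
def swapDirection [DecidableEq ι] (𝕜 : Type*) [Ring 𝕜] (i j k : ι) : Matrix ι ι 𝕜 :=
  .single i k 1 + .single k i 1 - .single j k 1 - .single k j 1

lemma sub_submatrix_swap_eq_sum [Fintype ι] [DecidableEq ι] [CommRing 𝕜] {D : Matrix ι ι 𝕜}
    (hD : D.IsSymm) (hD0 : D.diag = 0) (i j : ι) :
    D - D.submatrix (swap i j) (swap i j) =
      ∑ k ∈ {i, j}ᶜ, (D i k - D j k) • swapDirection 𝕜 i j k := by
  have hdiag (p : ι) : D p p = 0 := congrFun hD0 p
  have hsymm (p q : ι) := hD.apply p q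
  have hpick (r : ι) (c : 𝕜) :
      ∑ k ∈ {i, j}ᶜ, (D i k - D j k) * (if k = r then c else 0) =
        if r = i ∨ r = j then 0 else (D i r - D j r) * c := by
    simp only [mul_ite, mul_zero, sum_ite_eq', mem_compl, mem_insert, mem_singleton, ite_not]
  ext p q
  simp only [swapDirection, Matrix.sub_apply, Matrix.submatrix_apply, Matrix.sum_apply,
    Matrix.smul_apply, Matrix.add_apply, Matrix.single_apply, smul_eq_mul, mul_add, mul_sub,
    sum_add_distrib, sum_sub_distrib, ite_and, and_comm (a := i = _), and_comm (a := j = _),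
    hpick, swap_apply_def]
  grind

lemma two_mul_sub_eq_sum_swapDirection [Fintype ι] [DecidableEq ι] [CommRing 𝕜]
    {T : Matrix ι ι 𝕜 →ₗ[𝕜] 𝕜} {i j : ι} {D : Matrix ι ι 𝕜} {x : ι → 𝕜}
    (hD : D.IsSymm) (hD0 : D.diag = 0)
    (hx : ∀ σ : Perm ι, x (σ i) - x (σ j) = T (D.submatrix σ σ)) (σ : Perm ι) :
    2 * (x (σ i) - x (σ j)) =
      ∑ k ∈ {i, j}ᶜ, T (swapDirection 𝕜 i j k) * (D (σ i) (σ k) - D (σ j) (σ k)) := by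
  have hvar := congrArg T (sub_submatrix_swap_eq_sum (hD.submatrix σ)
    (funext fun k => congrFun hD0 (σ k)) i j)
  have hswap := hx (σ * swap i j)
  simp only [Perm.mul_apply, swap_apply_left, swap_apply_right, Perm.coe_mul,
    ← Matrix.submatrix_submatrix] at hswap
  simp only [map_sub, ← hx, ← hswap, map_sum, map_smul, smul_eq_mul, Matrix.submatrix_apply,
    mul_comm _ (T _)] at hvar
  linear_combination hvar

theorem exists_sub_eq_mul_sum_sub [Fintype ι] [Field 𝕜] [LinearOrder 𝕜]
    [IsStrictOrderedRing 𝕜] (T : Matrix ι ι 𝕜 →ₗ[𝕜] 𝕜) {i j : ι} (hij : i ≠ j) :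
    ∃ α : 𝕜, ∀ (D : Matrix ι ι 𝕜) (x : ι → 𝕜), D.IsSymm → D.diag = 0 →
      (∀ σ : Perm ι, x (σ i) - x (σ j) = T (D.submatrix σ σ)) →
      x i - x j = α * ∑ k, (D i k - D j k) := by
  classical
  let β := fun k => T (swapDirection 𝕜 i j k)
  let s : Finset ι := {i, j}ᶜ
  refine ⟨(∑ k ∈ s, β k) / (2 * #s), fun D x hD hD0 hx => ?_⟩
  have htwo (σ : Perm ι) (hi : σ i = i) (hj : σ j = j) :
      ∑ k ∈ s, β k * (D i (σ k) - D j (σ k)) = 2 * (x i - x j) := by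
    simpa only [hi, hj] using (two_mul_sub_eq_sum_swapDirection hD hD0 hx σ).symm
  have hone : ∑ k ∈ s, β k * (D i k - D j k) = 2 * (x i - x j) := htwo 1 rfl rfl
  have hmean : #s * ∑ k ∈ s, β k * (D i k - D j k) =
      (∑ k ∈ s, β k) * ∑ k ∈ s, (D i k - D j k) := by
    refine card_mul_sum_mul_eq_of_forall_swap (g := fun k => D i k - D j k) fun a ha b hb => ?_
    have fixed {p : ι} (hp : p ∉ s) : swap a b p = p :=
      swap_apply_of_ne_of_ne (ne_of_mem_of_not_mem ha hp).symm (ne_of_mem_of_not_mem hb hp).symm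
    rw [htwo _ (fixed (by simp [s])) (fixed (by simp [s])), hone]
  have hsum : ∑ k, (D i k - D j k) = ∑ k ∈ s, (D i k - D j k) := by
    rw [← sum_add_sum_compl {i, j}, sum_pair hij, hD.apply i j,
      show D i i = 0 from congrFun hD0 i, show D j j = 0 from congrFun hD0 j]
    ring
  rw [hone, ← hsum] at hmean
  rcases s.eq_empty_or_nonempty with hs | hs
  · simpa [hs] using hone
  have hcard : (#s : 𝕜) ≠ 0 := Nat.cast_ne_zero.2 hs.card_ne_zero
  field_simp
  linear_combination hmean

theorem exists_forall_sub_eq_mul_sum_sub [Fintype ι] [Field 𝕜] [LinearOrder 𝕜]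
    [IsStrictOrderedRing 𝕜] (T : Matrix ι ι 𝕜 →ₗ[𝕜] 𝕜) {i j : ι} (hij : i ≠ j) :
    ∃ α : 𝕜, ∀ (D : Matrix ι ι 𝕜) (x : ι → 𝕜), D.IsSymm → D.diag = 0 →
      (∀ σ : Perm ι, x (σ i) - x (σ j) = T (D.submatrix σ σ)) →
      ∀ k, x i - x k = α * ∑ l, (D i l - D k l) := by
  classical
  obtain ⟨α, hα⟩ := exists_sub_eq_mul_sum_sub T hij
  refine ⟨α, fun D x hD hD0 hx k => ?_⟩
  rcases eq_or_ne k i with rfl | hki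
  · simp
  let τ := swap j k
  have hi : τ i = i := swap_apply_of_ne_of_ne hij hki.symm
  have h := hα (D.submatrix τ τ) (x ∘ τ) (hD.submatrix τ) (funext fun l => congrFun hD0 (τ l))
    fun σ => hx (τ * σ)
  simp only [Function.comp_apply, Matrix.submatrix_apply, hi, τ, swap_apply_left] at h
  rw [h, Equiv.sum_comp τ fun l => D i l - D k l]

end Symmetrization

section PowerDifference

open Finset
open scoped RealInnerProductSpace

variable {E : Type*} [NormedAddCommGroup E] [InnerProductSpace ℝ E]

lemma dist_sq_sub_dist_sq (x a b : E) :
    dist x a ^ 2 - dist x b ^ 2 = ‖a‖ ^ 2 - ‖b‖ ^ 2 + 2 * ⟪x, b - a⟫ := by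
  rw [dist_eq_norm, dist_eq_norm, norm_sub_sq_real, norm_sub_sq_real, inner_sub_right]
  ring

lemma dist_sq_smul_add_smul_sub_dist_sq (t : ℝ) (x y a b : E) :
    dist (t • x + (1 - t) • y) a ^ 2 - dist (t • x + (1 - t) • y) b ^ 2 =
      t * (dist x a ^ 2 - dist x b ^ 2) + (1 - t) * (dist y a ^ 2 - dist y b ^ 2) := by
  simp only [dist_sq_sub_dist_sq, inner_add_left, real_inner_smul_left]
  ring

lemma card_mul_dist_sq_centroid_sub_dist_sq {ι : Type*} [Fintype ι] [Nonempty ι] (p : ι → E)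
    (a b : E) :
    Fintype.card ι * (dist (univ.centroid ℝ p) a ^ 2 - dist (univ.centroid ℝ p) b ^ 2) =
      ∑ k, (dist a (p k) ^ 2 - dist b (p k) ^ 2) := by
  have hcentroid : (Fintype.card ι : ℝ) • univ.centroid ℝ p = ∑ k, p k := by
    rw [centroid_def, affineCombination_eq_linear_combination _ _ _
      (sum_centroidWeights_eq_one_of_nonempty ℝ _ univ_nonempty)]
    simp [← smul_sum, smul_smul]
  simp only [dist_comm _ (p _), dist_sq_sub_dist_sq, sum_add_distrib, ← mul_sum, ← sum_inner,
    ← hcentroid, real_inner_smul_left, sum_const, card_univ, nsmul_eq_mul]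
  ring

lemma eq_of_forall_dist_sq_sub_dist_sq_eq {ι : Type*} {p : ι → E}
    (hp : vectorSpan ℝ (Set.range p) = ⊤) (i : ι) {x y : E}
    (h : ∀ k, dist x (p i) ^ 2 - dist x (p k) ^ 2 = dist y (p i) ^ 2 - dist y (p k) ^ 2) :
    x = y := by
  rw [vectorSpan_range_eq_span_range_vsub_right ℝ p i] at hp
  have hinner : innerₗ E x = innerₗ E y := LinearMap.ext_on_range hp fun k => by
    have hk := h k
    rw [dist_sq_sub_dist_sq, dist_sq_sub_dist_sq] at hk
    simp only [innerₗ_apply_apply, vsub_eq_sub]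
    linarith
  exact ext_inner_right ℝ (LinearMap.congr_fun hinner)

theorem eq_smul_centroid_add_smul_circumcenter {n : ℕ} {s : Affine.Simplex ℝ E n}
    (hs : vectorSpan ℝ (Set.range s.points) = ⊤) {x : E} {α : ℝ}
    (h : ∀ k, dist x (s.points 0) ^ 2 - dist x (s.points k) ^ 2 =
      α * ∑ l, (dist (s.points 0) (s.points l) ^ 2 - dist (s.points k) (s.points l) ^ 2)) :
    x = (α * (n + 1)) • univ.centroid ℝ s.points + (1 - α * (n + 1)) • s.circumcenter := by
  refine eq_of_forall_dist_sq_sub_dist_sq_eq hs 0 fun k => ?_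
  rw [h, dist_sq_smul_add_smul_sub_dist_sq, s.dist_circumcenter_eq_circumradius',
    s.dist_circumcenter_eq_circumradius', ← card_mul_dist_sq_centroid_sub_dist_sq, Fintype.card_fin]
  push_cast
  ring

end PowerDifference

section Centers

open MvPolynomial
open scoped RealInnerProductSpace

/-- Equivariance under all similarities, orientation-preserving or not, of a point attached to
tuples of points. Only the values on affinely independent tuples matter. -/
def IsSimilarityEquivariant {ι E : Type*} [NormedAddCommGroup E] [NormedSpace ℝ E]
    (Ctr : (ι → E) → E) : Prop :=
  ∀ f : E → E, (∃ r : ℝ, 0 < r ∧ ∀ x y, dist (f x) (f y) = r * dist x y) →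
    ∀ Δ : ι → E, AffineIndependent ℝ Δ → Ctr (f ∘ Δ) = f (Ctr Δ)

/-- The Euclidean distance matrix of a family of points: its entries are the squared distances. -/
def sqDistMatrix {ι P : Type*} [Dist P] (p : ι → P) : Matrix ι ι ℝ :=
  .of fun i j => dist (p i) (p j) ^ 2

lemma isSymm_sqDistMatrix {ι P : Type*} [PseudoMetricSpace P] (p : ι → P) :
    (sqDistMatrix p).IsSymm :=
  .ext fun i j => congrArg (· ^ 2) (dist_comm (p j) (p i))

lemma diag_sqDistMatrix {ι P : Type*} [PseudoMetricSpace P] (p : ι → P) :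
    (sqDistMatrix p).diag = 0 := by
  ext i
  simp [sqDistMatrix]

section

variable {k V : Type*} [Ring k] [AddCommGroup V] [Module k V] {n : ℕ}

lemma affineIndependent_iff_linearIndependent_sub {Δ : Fin (n + 1) → V} :
    AffineIndependent k Δ ↔ LinearIndependent k fun i : Fin n => Δ i.succ - Δ 0 := by
  rw [affineIndependent_iff_linearIndependent_vsub k Δ 0,
    ← linearIndependent_equiv (finSuccAboveEquiv (0 : Fin (n + 1)))]
  rfl

lemma affineIndependent_cons_zero {v : Fin n → V} :
    AffineIndependent k (Fin.cons 0 v : Fin (n + 1) → V) ↔ LinearIndependent k v := by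
  simp [affineIndependent_iff_linearIndependent_sub]

end

section

variable {n : ℕ} {E : Type*} [NormedAddCommGroup E] [NormedSpace ℝ E]
  {Ctr : (Fin (n + 1) → E) → E}

lemma IsSimilarityEquivariant.apply_cons_zero_edges (hCtr : IsSimilarityEquivariant Ctr)
    {Δ : Fin (n + 1) → E} (hΔ : AffineIndependent ℝ Δ) :
    Ctr (Fin.cons 0 fun i => Δ i.succ - Δ 0) = Ctr Δ - Δ 0 := by
  rw [← hCtr (· - Δ 0) ⟨1, one_pos, by simp⟩ Δ hΔ]
  congr 1
  ext i
  refine Fin.cases ?_ (fun i => ?_) i <;> simp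

lemma IsSimilarityEquivariant.apply_cons_zero_isometry (hCtr : IsSimilarityEquivariant Ctr)
    (L : E ≃ₗᵢ[ℝ] E) {v : Fin n → E} (hv : LinearIndependent ℝ v) :
    Ctr (Fin.cons 0 (L ∘ v)) = L (Ctr (Fin.cons 0 v)) := by
  rw [← hCtr L ⟨1, one_pos, by simp⟩ _ (affineIndependent_cons_zero.2 hv),
    Fin.comp_cons, map_zero]

lemma IsSimilarityEquivariant.apply_cons_zero_smul (hCtr : IsSimilarityEquivariant Ctr)
    {s : ℝ} (hs : 0 < s) {v : Fin n → E} (hv : LinearIndependent ℝ v) :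
    Ctr (Fin.cons 0 (s • v)) = s • Ctr (Fin.cons 0 v) := by
  have hsimilar (x y : E) : dist (s • x) (s • y) = s * dist x y := by
    rw [dist_smul₀, Real.norm_of_nonneg hs.le]
  rw [← hCtr (s • ·) ⟨s, hs, hsimilar⟩ _ (affineIndependent_cons_zero.2 hv),
    Fin.comp_cons, smul_zero]
  rfl

end

variable {n : ℕ} {Ctr : (Fin (n + 1) → EuclideanSpace ℝ (Fin n)) → EuclideanSpace ℝ (Fin n)}

lemma factorial_mul_signedVol_cons_zero (v : Fin n → EuclideanSpace ℝ (Fin n)) :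
    n.factorial * signedVol n (Fin.cons 0 v) =
      (EuclideanSpace.basisFun (Fin n) ℝ).toBasis.det v := by
  rw [signedVol, mul_div_cancel₀ _ (by positivity), Module.Basis.det_apply]
  simp only [Fin.cons_succ, Fin.cons_zero, sub_zero]
  rfl

lemma exists_basisFun_det_mul_inner_eq_eval {P : Fin n → MvPolynomial (Fin n × Fin (n + 1)) ℝ}
    (hP : ∀ Δ : Fin (n + 1) → EuclideanSpace ℝ (Fin n), AffineIndependent ℝ Δ → ∀ ℓ : Fin n,
      signedVol n Δ * Ctr Δ ℓ = eval (fun v => Δ v.2 v.1) (P ℓ)) (i : Fin n) :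
    ∃ p : MvPolynomial (Fin n × Fin n) ℝ, ∀ v, LinearIndependent ℝ v →
      (EuclideanSpace.basisFun (Fin n) ℝ).toBasis.det v * ⟪Ctr (Fin.cons 0 v), v i⟫ =
        eval (entries v) p := by
  let q (ℓ : Fin n) : MvPolynomial (Fin n × Fin n) ℝ :=
    bind₁ (fun x => (Fin.cons 0 fun j => X (x.1, j) : Fin (n + 1) → _) x.2) (P ℓ)
  have hq (v : Fin n → EuclideanSpace ℝ (Fin n)) (ℓ : Fin n) :
      eval (entries v) (q ℓ) =
        eval (fun x => (Fin.cons 0 v : Fin (n + 1) → EuclideanSpace ℝ (Fin n)) x.2 x.1) (P ℓ) := by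
    simp only [q, ← aeval_eq_eval]
    rw [aeval_bind₁]
    congr 2
    ext ⟨r, c⟩
    refine Fin.cases ?_ (fun c => ?_) c
    · simp
    · simp only [Fin.cons_succ, aeval_X, entries_apply]
  refine ⟨MvPolynomial.C (n.factorial : ℝ) * ∑ ℓ, q ℓ * X (ℓ, i), fun v hv => ?_⟩
  simp only [map_mul, map_sum, hq, ← hP _ (affineIndependent_cons_zero.2 hv), eval_C, eval_X,
    ← factorial_mul_signedVol_cons_zero, PiLp.inner_apply, Finset.mul_sum]
  refine Finset.sum_congr rfl fun ℓ _ => ?_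
  simp only [entries_apply, RCLike.inner_apply, conj_trivial]
  ring

theorem IsSimilarityEquivariant.exists_inner_eq_sum_mul_inner (hCtr : IsSimilarityEquivariant Ctr)
    {P : Fin n → MvPolynomial (Fin n × Fin (n + 1)) ℝ}
    (hP : ∀ Δ : Fin (n + 1) → EuclideanSpace ℝ (Fin n), AffineIndependent ℝ Δ → ∀ ℓ : Fin n,
      signedVol n Δ * Ctr Δ ℓ = eval (fun v => Δ v.2 v.1) (P ℓ)) (i : Fin n) :
    ∃ a : Fin n → Fin n → ℝ, ∀ Δ, AffineIndependent ℝ Δ →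
      ⟪Ctr Δ - Δ 0, Δ i.succ - Δ 0⟫ =
        ∑ j, ∑ k, a j k * ⟪Δ (Fin.succ j) - Δ 0, Δ k.succ - Δ 0⟫ := by
  have hiso : IsIsometryInvariant fun v : Fin n → _ => ⟪Ctr (Fin.cons 0 v), v i⟫ := fun L v hv => by
    simp only [hCtr.apply_cons_zero_isometry L hv, Function.comp_apply, L.inner_map_map]
  have hscale (s : ℝ) (hs : 0 < s) (v : Fin n → _) (hv : LinearIndependent ℝ v) :
      ⟪Ctr (Fin.cons 0 (s • v)), (s • v) i⟫ = s ^ 2 * ⟪Ctr (Fin.cons 0 v), v i⟫ := by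
    rw [hCtr.apply_cons_zero_smul hs hv, Pi.smul_apply, real_inner_smul_left, real_inner_smul_right]
    ring
  obtain ⟨p, hp⟩ := exists_basisFun_det_mul_inner_eq_eval hP i
  obtain ⟨q, hq⟩ := exists_eq_eval_of_basisFun_det_mul_eq_eval hiso hp
  obtain ⟨a, ha⟩ := exists_eq_sum_mul_inner_of_eq_eval hiso hscale hq
  refine ⟨a, fun Δ hΔ => ?_⟩
  rw [← hCtr.apply_cons_zero_edges hΔ]
  exact ha _ (affineIndependent_iff_linearIndependent_sub.1 hΔ)

lemma two_mul_inner_sub_sub {E : Type*} [NormedAddCommGroup E] [InnerProductSpace ℝ E] (x y z : E) :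
    2 * ⟪x - z, y - z⟫ = dist x z ^ 2 + dist y z ^ 2 - dist x y ^ 2 := by
  rw [dist_eq_norm, dist_eq_norm, dist_eq_norm, ← sub_sub_sub_cancel_right x y z,
    norm_sub_sq_real (x - z)]
  ring

theorem exists_linearMap_dist_sq_sub_dist_sq_eq {n : ℕ} (a : Fin n → Fin n → ℝ) (i : Fin n)
    (E : Type*) [NormedAddCommGroup E] [InnerProductSpace ℝ E] :
    ∃ T : Matrix (Fin (n + 1)) (Fin (n + 1)) ℝ →ₗ[ℝ] ℝ, ∀ (x : E) (Δ : Fin (n + 1) → E),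
      ⟪x - Δ 0, Δ i.succ - Δ 0⟫ =
        ∑ j : Fin n, ∑ k : Fin n, a j k * ⟪Δ j.succ - Δ 0, Δ k.succ - Δ 0⟫ →
      dist x (Δ 0) ^ 2 - dist x (Δ i.succ) ^ 2 = T (sqDistMatrix Δ) := by
  let entry (j k : Fin (n + 1)) := Matrix.entryLinearMap ℝ ℝ j k
  let gram (j k : Fin n) := entry j.succ 0 + entry k.succ 0 - entry j.succ k.succ
  refine ⟨∑ j, ∑ k, a j k • gram j k - entry i.succ 0, fun x Δ h => ?_⟩
  have h₂ := congrArg (2 * ·) h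
  simp only [Finset.mul_sum, mul_left_comm (2 : ℝ), two_mul_inner_sub_sub] at h₂
  simp only [LinearMap.sub_apply, LinearMap.sum_apply, LinearMap.smul_apply, LinearMap.add_apply,
    gram, entry, Matrix.entryLinearMap_apply, sqDistMatrix, Matrix.of_apply, smul_eq_mul, ← h₂]
  ring

end Centers

theorem circumcenter_of_mass_uniqueness (n : ℕ) (hn : 1 ≤ n)
    (Ctr : (Fin (n+1) → EuclideanSpace ℝ (Fin n)) → EuclideanSpace ℝ (Fin n))
    -- (1) `Ctr` commutes with all similarities (orientation-preserving or not)
    (h1 : ∀ f : EuclideanSpace ℝ (Fin n) → EuclideanSpace ℝ (Fin n),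
      (∃ r : ℝ, 0 < r ∧ ∀ x y, dist (f x) (f y) = r * dist x y) →
      ∀ Δ : Fin (n+1) → EuclideanSpace ℝ (Fin n), AffineIndependent ℝ Δ →
        Ctr (f ∘ Δ) = f (Ctr Δ))
    -- (2) `Ctr` is invariant under permutations of the vertices
    (h2 : ∀ Δ : Fin (n+1) → EuclideanSpace ℝ (Fin n), AffineIndependent ℝ Δ →
      ∀ σ : Equiv.Perm (Fin (n+1)), Ctr (Δ ∘ σ) = Ctr Δ)
    -- (3) `Vol(Δ) · Ctr(Δ)` is polynomial in the coordinates of the vertices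
    (h3 : ∃ P : Fin n → MvPolynomial (Fin n × Fin (n+1)) ℝ,
      ∀ Δ : Fin (n+1) → EuclideanSpace ℝ (Fin n), AffineIndependent ℝ Δ →
      ∀ ℓ : Fin n,
        signedVol n Δ * Ctr Δ ℓ = MvPolynomial.eval (fun v => Δ v.2 v.1) (P ℓ)) :
    ∃ t : ℝ, ∀ (Δ : Fin (n+1) → EuclideanSpace ℝ (Fin n)) (hΔ : AffineIndependent ℝ Δ),
      Ctr Δ = t • Finset.centroid ℝ Finset.univ Δ +
        (1 - t) • (Affine.Simplex.mk Δ hΔ).circumcenter := by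
  let i : Fin n := ⟨0, hn⟩
  obtain ⟨P, hP⟩ := h3
  obtain ⟨a, ha⟩ := IsSimilarityEquivariant.exists_inner_eq_sum_mul_inner h1 hP i
  obtain ⟨T, hT⟩ := exists_linearMap_dist_sq_sub_dist_sq_eq a i (EuclideanSpace ℝ (Fin n))
  obtain ⟨α, hα⟩ := exists_forall_sub_eq_mul_sum_sub T i.succ_ne_zero.symm
  refine ⟨α * (n + 1), fun Δ hΔ => ?_⟩
  have hspan : vectorSpan ℝ (Set.range Δ) = ⊤ :=
    hΔ.vectorSpan_eq_top_of_card_eq_finrank_add_one (by simp)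
  refine eq_smul_centroid_add_smul_circumcenter (s := ⟨Δ, hΔ⟩) hspan ?_
  refine hα (sqDistMatrix Δ) (fun k => dist (Ctr Δ) (Δ k) ^ 2) (isSymm_sqDistMatrix Δ)
    (diag_sqDistMatrix Δ) fun σ => ?_
  have hσ := hT (Ctr (Δ ∘ σ)) (Δ ∘ σ) (ha _ (hΔ.comp_embedding σ.toEmbedding))
  rwa [h2 Δ hΔ σ] at hσ
end

section
/- The polynomials X_{i,jk} with 1 ≤ i ≤ n and 1 ≤ j ≤ k ≤ n (there are n²(n+1)/2 of them) are linearly independent over ℝ. -/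
/-- The `(n+1) × (n+1)` matrix whose `j`-th column is `(x_1^j, …, x_n^j, 1)`,
with entries in the polynomial ring in the variables `x_i^j`
(a variable is a pair `(i, j) : Fin n × Fin (n+1)`, `i` the coordinate index, `j` the vertex index). -/
noncomputable def Vmat (n : ℕ) : Matrix (Fin (n+1)) (Fin (n+1)) (MvPolynomial (Fin n × Fin (n+1)) ℝ) :=
  Matrix.of fun r c => if h : (r : ℕ) < n then MvPolynomial.X (⟨r, h⟩, c) else 1

/-- The basic determinant `V`. -/
noncomputable def Vpoly (n : ℕ) : MvPolynomial (Fin n × Fin (n+1)) ℝ := (Vmat n).det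

/-- The matrix of `V` with its `i`-th row replaced by `(x_j^0 x_k^0, …, x_j^n x_k^n)`. -/
noncomputable def Xmat (n : ℕ) (i j k : Fin n) :
    Matrix (Fin (n+1)) (Fin (n+1)) (MvPolynomial (Fin n × Fin (n+1)) ℝ) :=
  Matrix.of fun r c =>
    if (r : ℕ) = (i : ℕ) then MvPolynomial.X (j, c) * MvPolynomial.X (k, c)
    else if h : (r : ℕ) < n then MvPolynomial.X (⟨r, h⟩, c) else 1

/-- The basic determinant `X_{i,jk}`. -/
noncomputable def Xpoly (n : ℕ) (i j k : Fin n) : MvPolynomial (Fin n × Fin (n+1)) ℝ :=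
  (Xmat n i j k).det


/- An alternant is a sum over permutations `σ` of signed monomials, and the exponents occurring in
it determine `a ∘ σ`, where `a` is the family of row exponents. Hence if `a` is injective, the
diagonal monomial occurs in the alternant of `a` with coefficient `1`, and in no alternant whose set
of row exponents is different: taking these coefficients yields functionals dual to the alternants.
Each `X_{i,jk}` is the alternant of the row exponents `e_1, …, e_n, 0` of `V` with `e_i` replaced by
`e_j + e_k`, and this set of exponents determines `i` and `{j, k}`. -/

open Function MvPolynomial
open Finsupp (single)

section Update

variable {κ β : Type*} [DecidableEq κ] {f : κ → β}

theorem injective_update_of_notMem_range (hf : Injective f) {i : κ} {v : β}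
    (hv : v ∉ Set.range f) : Injective (update f i v) := by
  have ne_v (k : κ) : f k ≠ v := fun h => hv ⟨k, h⟩
  intro k l hkl
  simp only [update_apply] at hkl
  split_ifs at hkl with hk hl hl
  · exact hk.trans hl.symm
  · exact absurd hkl.symm (ne_v l)
  · exact absurd hkl (ne_v k)
  · exact hf hkl

theorem range_update_injective (hf : Injective f) :
    Injective fun p : κ × {v // v ∉ Set.range f} => Set.range (update f p.1 p.2) := by
  rintro ⟨i, v, hv⟩ ⟨i', v', hv'⟩ (h : Set.range (update f i v) = Set.range (update f i' v'))
  have ne_v (k : κ) : f k ≠ v := fun h => hv ⟨k, h⟩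
  obtain rfl : v = v' := by
    obtain ⟨k, hk⟩ : v ∈ Set.range (update f i' v') := h ▸ ⟨i, update_self i v f⟩
    rw [update_apply] at hk
    split_ifs at hk
    · exact hk.symm
    · exact absurd hk (ne_v k)
  obtain rfl : i = i' := by
    by_contra hne
    obtain ⟨k, hk⟩ : f i ∈ Set.range (update f i v) := h ▸ ⟨i, update_of_ne hne v f⟩
    rw [update_apply] at hk
    split_ifs at hk with hki
    · exact ne_v i hk.symm
    · exact hki (hf hk)
  rfl

end Update

section Alternant

variable {α κ : Type*}

/-- The matrix of a (multivariate) alternant: its `(r, c)` entry is the monomial with exponent `a r`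
in the coordinates of the `c`-th point, the variable `(m, c)` being the `m`-th such coordinate. -/
noncomputable def alternantMatrix (R : Type*) [CommSemiring R] (a : κ → α →₀ ℕ) :
    Matrix κ κ (MvPolynomial (α × κ) R) :=
  Matrix.of fun r c => rename (fun m => (m, c)) (monomial (a r) 1)

variable [Fintype κ]

/-- The exponent of the product over `c` of the monomials with exponents `b c` in the coordinates of
the `c`-th point; for `b := a` this product is the diagonal term of `(alternantMatrix R a).det`. -/
noncomputable def jointExponent (b : κ → α →₀ ℕ) : α × κ →₀ ℕ :=
  ∑ c, (b c).mapDomain fun m => (m, c)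

theorem jointExponent_apply (b : κ → α →₀ ℕ) (m : α) (c : κ) : jointExponent b (m, c) = b c m := by
  rw [jointExponent, Finsupp.finsetSum_apply, Finset.sum_eq_single c]
  · exact Finsupp.mapDomain_apply (Prod.mk_left_injective c) (b c) m
  · intro c' _ hc'
    refine Finsupp.mapDomain_of_notMem_range _ _ ?_
    rintro ⟨m', hm'⟩
    exact hc' (Prod.ext_iff.1 hm').2
  · simp

theorem jointExponent_injective : Injective (jointExponent : (κ → α →₀ ℕ) → α × κ →₀ ℕ) := by
  intro b b' h
  ext c m
  rw [← jointExponent_apply b, h, jointExponent_apply]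

variable [DecidableEq κ] {R : Type*} [CommRing R]

theorem det_alternantMatrix (a : κ → α →₀ ℕ) :
    (alternantMatrix R a).det =
      ∑ σ : Equiv.Perm κ, Equiv.Perm.sign σ • monomial (jointExponent (a ∘ σ)) (1 : R) := by
  simp only [Matrix.det_apply, alternantMatrix, Matrix.of_apply, rename_monomial, jointExponent,
    monomial_sum_one, comp_apply]

theorem coeff_jointExponent_det_alternantMatrix [DecidableEq α] (a b : κ → α →₀ ℕ) :
    (alternantMatrix R a).det.coeff (jointExponent b) =
      ∑ σ : Equiv.Perm κ, if a ∘ σ = b then ((Equiv.Perm.sign σ : ℤ) : R) else 0 := by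
  simp only [det_alternantMatrix, coeff_sum, Units.smul_def, coeff_smul, coeff_monomial,
    jointExponent_injective.eq_iff, smul_ite, zsmul_one, smul_zero]

theorem coeff_jointExponent_det_alternantMatrix_self {a : κ → α →₀ ℕ} (ha : Injective a) :
    (alternantMatrix R a).det.coeff (jointExponent a) = 1 := by
  classical
  have comp_eq_iff (σ : Equiv.Perm κ) : a ∘ σ = a ↔ σ = 1 := by
    rw [← Equiv.coe_fn_injective.eq_iff, ← ha.comp_left.eq_iff]
    rfl
  simp [coeff_jointExponent_det_alternantMatrix, comp_eq_iff]

theorem coeff_jointExponent_det_alternantMatrix_of_range_ne {a b : κ → α →₀ ℕ}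
    (h : Set.range a ≠ Set.range b) : (alternantMatrix R a).det.coeff (jointExponent b) = 0 := by
  classical
  have comp_ne (σ : Equiv.Perm κ) : a ∘ σ ≠ b := by
    rintro rfl
    exact h (σ.surjective.range_comp a).symm
  simp [coeff_jointExponent_det_alternantMatrix, comp_ne]

theorem linearIndependent_det_alternantMatrix {ι : Type*} {a : ι → κ → α →₀ ℕ}
    (ha : ∀ p, Injective (a p)) (hrange : Injective fun p => Set.range (a p)) :
    LinearIndependent R fun p => (alternantMatrix R (a p)).det :=
  .of_pairwise_dual_eq_zero_one _ (fun p => lcoeff R (jointExponent (a p)))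
    (fun _ _ hpq => coeff_jointExponent_det_alternantMatrix_of_range_ne (hrange.ne hpq.symm))
    (fun p => coeff_jointExponent_det_alternantMatrix_self (ha p))

theorem linearIndependent_det_alternantMatrix_update {a : κ → α →₀ ℕ} (ha : Injective a) :
    LinearIndependent R fun p : κ × {d // d ∉ Set.range a} =>
      (alternantMatrix R (update a p.1 p.2)).det :=
  linearIndependent_det_alternantMatrix
    (fun p => injective_update_of_notMem_range ha p.2.2) (range_update_injective ha)

end Alternant

/-- The row exponents `e_1, …, e_n, 0` of `V`: its last row, of ones, consists of the monomials
with exponent `0`. -/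
noncomputable def affineExponent (n : ℕ) : Fin (n + 1) → Fin n →₀ ℕ :=
  Fin.snoc (α := fun _ => Fin n →₀ ℕ) (fun m => single m 1) 0

theorem Xmat_eq_alternantMatrix {n : ℕ} (i j k : Fin n) :
    Xmat n i j k = alternantMatrix ℝ (update (affineExponent n) i.castSucc
      (single j 1 + single k 1)) := by
  have monomial_single_add_single : monomial (single j 1 + single k 1) (1 : ℝ) = X j * X k := by
    simp [X, monomial_mul]
  ext1 r c
  cases r using Fin.lastCases with
  | last => simp [Xmat, alternantMatrix, affineExponent, i.isLt.ne', (Fin.castSucc_lt_last i).ne']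
  | cast m =>
    by_cases hm : m = i
    · subst hm
      simp [Xmat, alternantMatrix, monomial_single_add_single]
    · simp [Xmat, alternantMatrix, affineExponent, hm, Fin.val_inj, X, rename_monomial]

theorem affineExponent_injective (n : ℕ) : Injective (affineExponent n) :=
  Fin.snoc_injective_iff.2 ⟨Finsupp.single_left_injective one_ne_zero, by simp⟩

theorem degree_affineExponent_le_one {n : ℕ} (r : Fin (n + 1)) :
    (affineExponent n r).degree ≤ 1 := by
  cases r using Fin.lastCases <;> simp [affineExponent]

theorem single_add_single_notMem_range_affineExponent {n : ℕ} (j k : Fin n) :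
    single j 1 + single k 1 ∉ Set.range (affineExponent n) := by
  rintro ⟨r, hr⟩
  have hdeg := degree_affineExponent_le_one r
  simp [hr] at hdeg

theorem single_add_single_inj_of_le {α : Type*} [PartialOrder α] {j k j' k' : α} (hjk : j ≤ k)
    (hjk' : j' ≤ k') (h : single j (1 : ℕ) + single k 1 = single j' 1 + single k' 1) :
    j = j' ∧ k = k' := by
  rcases (Finsupp.single_add_single_eq_single_add_single one_ne_zero one_ne_zero).1 h with
    hsame | ⟨-, rfl, rfl⟩ | ⟨htwo, -⟩
  · exact hsame
  · exact ⟨hjk.antisymm hjk', hjk'.antisymm hjk⟩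
  · exact absurd htwo two_ne_zero

theorem Xpoly_linearIndependent_general (R : Type*) [CommRing R] (n : ℕ) :
    LinearIndependent R fun p : {p : Fin n × Fin n × Fin n // p.2.1 ≤ p.2.2} =>
      (alternantMatrix R (update (affineExponent n) p.1.1.castSucc
        (single p.1.2.1 1 + single p.1.2.2 1))).det := by
  refine (linearIndependent_det_alternantMatrix_update (affineExponent_injective n)).comp
    (fun p : {p : Fin n × Fin n × Fin n // p.2.1 ≤ p.2.2} =>
      (p.1.1.castSucc, ⟨_, single_add_single_notMem_range_affineExponent p.1.2.1 p.1.2.2⟩)) ?_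
  rintro ⟨⟨i, j, k⟩, hjk⟩ ⟨⟨i', j', k'⟩, hjk'⟩ h
  simp only [Prod.mk.injEq, Subtype.mk.injEq, Fin.castSucc_inj] at h
  obtain ⟨rfl, h⟩ := h
  obtain ⟨rfl, rfl⟩ := single_add_single_inj_of_le hjk hjk' h
  rfl

/-- The polynomials `X_{i,jk}`, `1 ≤ i ≤ n`, `1 ≤ j ≤ k ≤ n`, are linearly independent over `ℝ`. -/
theorem Xpoly_linearIndependent (n : ℕ) (hn : 1 ≤ n) :
    LinearIndependent ℝ
      (fun p : {p : Fin n × Fin n × Fin n // p.2.1 ≤ p.2.2} =>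
        Xpoly n p.1.1 p.1.2.1 p.1.2.2) := by
  simp only [Xpoly, Xmat_eq_alternantMatrix]
  exact Xpoly_linearIndependent_general ℝ n
end

section
/- Let m be a monomial of total degree n+1 in the variables x_i^j. If some superscript value j₀ ∈ {0,…,n} occurs in m with total multiplicity at least 3, then Skew(m) = 0. -/
/-- The action of `S_{n+1}` on the polynomial ring in the variables `x_i^j`
(`(i, j) : Fin n × Fin (n+1)`) by permuting the superscripts `j`. -/
noncomputable def permAct (n : ℕ) (σ : Equiv.Perm (Fin (n+1))) :
    MvPolynomial (Fin n × Fin (n+1)) ℝ →+* MvPolynomial (Fin n × Fin (n+1)) ℝ :=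
  (MvPolynomial.rename ((Equiv.refl (Fin n)).prodCongr σ)).toRingHom

/-- Skew-symmetrization over the superscripts: `Skew(f) = Σ_σ sgn(σ) · σ·f`. -/
noncomputable def skew (n : ℕ) (f : MvPolynomial (Fin n × Fin (n+1)) ℝ) :
    MvPolynomial (Fin n × Fin (n+1)) ℝ :=
  ∑ σ : Equiv.Perm (Fin (n+1)), (Equiv.Perm.sign σ : ℤ) • permAct n σ f

/-!
If neither of two distinct superscripts `a`, `b` occurs in `p`, then `σ` and `σ * swap a b` act
alike on `p` but have opposite signs, so the terms of `Skew(p)` cancel in pairs. In a monomial of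
degree `D` in which `j₀` has multiplicity `m ≥ 1`, at most `D - m` superscripts other than `j₀`
occur; for `D = n + 1` and `m ≥ 3` this leaves at least two of the `n + 1` superscripts unused.
-/

section Counting

variable {κ : Type*} [Fintype κ]

theorem card_add_apply_le_sum_add_card_zeros_add_one (f : κ → ℕ) (j₀ : κ) :
    Fintype.card κ + f j₀ ≤ ∑ j, f j + Finset.card {j | f j = 0} + 1 := by
  classical
  have one_le (j : κ) : 1 ≤ f j + if f j = 0 then 1 else 0 := by
    split_ifs <;> omega
  calc
    Fintype.card κ + f j₀ = ∑ j ∈ Finset.univ.erase j₀, 1 + f j₀ + 1 := by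
      rw [← Finset.card_univ, ← Finset.card_erase_add_one (Finset.mem_univ j₀),
        Finset.card_eq_sum_ones]
      ring
    _ ≤ ∑ j ∈ Finset.univ.erase j₀, (f j + if f j = 0 then 1 else 0) +
          (f j₀ + if f j₀ = 0 then 1 else 0) + 1 := by
      gcongr with j
      · exact one_le j
      · exact Nat.le_add_right _ _
    _ = ∑ j, f j + Finset.card {j | f j = 0} + 1 := by
      rw [Finset.sum_erase_add _ _ (Finset.mem_univ j₀), Finset.sum_add_distrib,
        ← Finset.card_filter]

theorem exists_ne_apply_eq_zero_of_sum_add_three_le {f : κ → ℕ} {j₀ : κ}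
    (h : ∑ j, f j + 3 ≤ Fintype.card κ + f j₀) : ∃ a b, a ≠ b ∧ f a = 0 ∧ f b = 0 := by
  have one_lt_card : 1 < Finset.card {j | f j = 0} := by
    have := card_add_apply_le_sum_add_card_zeros_add_one f j₀
    omega
  obtain ⟨a, ha, b, hb, hab⟩ := Finset.one_lt_card.mp one_lt_card
  exact ⟨a, b, hab, (Finset.mem_filter.mp ha).2, (Finset.mem_filter.mp hb).2⟩

end Counting

theorem sum_sign_smul_eq_zero_of_odd_involution {κ M : Type*} [Fintype κ] [DecidableEq κ]
    [AddCommGroup M] {F : Equiv.Perm κ → M} {τ : Equiv.Perm κ} (sign_τ : Equiv.Perm.sign τ = -1)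
    (τ_mul_τ : τ * τ = 1) (hF : ∀ σ, F (σ * τ) = F σ) :
    ∑ σ, (Equiv.Perm.sign σ : ℤ) • F σ = 0 := by
  have τ_ne_one : τ ≠ 1 := by
    rintro rfl
    simp at sign_τ
  refine Finset.sum_involution (fun σ _ => σ * τ) (fun σ _ => ?_)
    (fun σ _ _ => mul_eq_left.not.mpr τ_ne_one) (fun σ _ => Finset.mem_univ _)
    (fun σ _ => by rw [mul_assoc, τ_mul_τ, mul_one])
  simp [hF, sign_τ]

theorem rename_eq_rename_of_forall_mem_vars {R α β : Type*} [CommSemiring R]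
    {p : MvPolynomial α R} {f g : α → β} (h : ∀ v ∈ p.vars, f v = g v) :
    MvPolynomial.rename f p = MvPolynomial.rename g p :=
  MvPolynomial.hom_congr_vars (f₁ := (MvPolynomial.rename f).toRingHom)
    (f₂ := (MvPolynomial.rename g).toRingHom) (by ext; simp) (fun v hv _ => by simp [h v hv]) rfl

theorem mapDomain_snd_apply {ι κ M : Type*} [Fintype ι] [AddCommMonoid M]
    (d : ι × κ →₀ M) (j : κ) : d.mapDomain Prod.snd j = ∑ i, d (i, j) := by
  classical
  induction d using Finsupp.induction_linear with
  | zero => simp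
  | add d e hd he => simp [Finsupp.mapDomain_add, hd, he, Finset.sum_add_distrib]
  | single v m =>
    obtain ⟨i, k⟩ := v
    by_cases hk : k = j <;> simp [Finsupp.mapDomain_single, Finsupp.single_apply, hk]

theorem apply_ne_of_mem_vars_monomial {R α β : Type*} [CommSemiring R] {d : α →₀ ℕ} {c : R}
    {f : α → β} {b : β} (hb : d.mapDomain f b = 0) {v : α}
    (hv : v ∈ (MvPolynomial.monomial d c).vars) : f v ≠ b := by
  classical
  have hvd : v ∈ d.support := by
    obtain ⟨e, he, hve⟩ := MvPolynomial.mem_vars_iff_mem_support v |>.mp hv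
    rwa [Finset.mem_singleton.mp (MvPolynomial.support_monomial_subset he)] at hve
  rintro rfl
  have hfv : f v ∈ (d.mapDomain f).support := by
    rw [Finsupp.mapDomain_support_of_subsingletonAddUnits]
    exact Finset.mem_image_of_mem f hvd
  exact Finsupp.mem_support_iff.mp hfv hb

section SkewSymmetrization

variable {R ι κ : Type*} [CommRing R] [Fintype κ] [DecidableEq κ]

/-- Skew-symmetrization over the second index of the variables, for arbitrary coefficients and index
types; `skew n` is the case `R = ℝ`, `ι = Fin n`, `κ = Fin (n + 1)`. -/
noncomputable def skewSymmetrization (p : MvPolynomial (ι × κ) R) : MvPolynomial (ι × κ) R :=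
  ∑ σ : Equiv.Perm κ, (Equiv.Perm.sign σ : ℤ) • MvPolynomial.rename (Prod.map id σ) p

theorem skew_eq_skewSymmetrization (n : ℕ) (p : MvPolynomial (Fin n × Fin (n + 1)) ℝ) :
    skew n p = skewSymmetrization p :=
  rfl

theorem skewSymmetrization_eq_zero_of_forall_mem_vars {p : MvPolynomial (ι × κ) R} {a b : κ}
    (hab : a ≠ b) (hp : ∀ v ∈ p.vars, v.2 ≠ a ∧ v.2 ≠ b) : skewSymmetrization p = 0 := by
  refine sum_sign_smul_eq_zero_of_odd_involution (Equiv.Perm.sign_swap hab)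
    (Equiv.swap_mul_self a b) fun σ => rename_eq_rename_of_forall_mem_vars fun v hv => ?_
  obtain ⟨ne_a, ne_b⟩ := hp v hv
  simp [Prod.map, Equiv.swap_apply_of_ne_of_ne ne_a ne_b]

theorem skew_monomial_eq_zero_of_mult_ge_three_general (d : ι × κ →₀ ℕ) (c : R) (j₀ : κ)
    (h : d.degree + 3 ≤ Fintype.card κ + d.mapDomain Prod.snd j₀) :
    skewSymmetrization (MvPolynomial.monomial d c) = 0 := by
  rw [← Finsupp.degree_mapDomain Prod.snd d, Finsupp.degree_eq_sum] at h
  obtain ⟨a, b, hab, ha, hb⟩ := exists_ne_apply_eq_zero_of_sum_add_three_le h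
  exact skewSymmetrization_eq_zero_of_forall_mem_vars hab fun v hv =>
    ⟨apply_ne_of_mem_vars_monomial ha hv, apply_ne_of_mem_vars_monomial hb hv⟩

end SkewSymmetrization

/-- If a monomial of total degree `n+1` has some superscript value occurring with total
multiplicity at least `3`, then its skew-symmetrization vanishes. -/
theorem skew_monomial_eq_zero_of_mult_ge_three (n : ℕ) (hn : 1 ≤ n)
    (d : (Fin n × Fin (n+1)) →₀ ℕ) (hdeg : (d.sum fun _ e => e) = n + 1)
    (j₀ : Fin (n+1)) (hj₀ : 3 ≤ ∑ i : Fin n, d (i, j₀)) :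
    skew n (MvPolynomial.monomial d (1 : ℝ)) = 0 := by
  rw [skew_eq_skewSymmetrization]
  exact skew_monomial_eq_zero_of_mult_ge_three_general d 1 j₀
    (by rw [show d.degree = n + 1 from hdeg, mapDomain_snd_apply, Fintype.card_fin]; gcongr)
end

section
/- For any points O, W_0, W_1, …, W_n ∈ ℝⁿ and any indices 1 ≤ i, j, k ≤ n, one has X_{i,jk}(W_0, …, W_n) = Σ_{m=0}^{n} X_{i,jk}(W_0, …, W_{m−1}, O, W_{m+1}, …, W_n), where the m-th summand is the evaluation of X_{i,jk} at the tuple obtained from (W_0, …, W_n) by replacing the m-th point W_m with O. -/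
/-! By Cramer's rule, `∑ m, A r m * det (A with column m replaced by b) = det A * b r` for every
row `r`. Replacing the vertex `W m` by `O` replaces exactly the `m`-th column of the matrix of
`X_{i,jk}`. Its last row consists of ones, and so does the last entry of the new column, so Cramer's
rule for the last row is the asserted additivity. -/

section Cramer

variable {ι R : Type*} [Fintype ι] [DecidableEq ι] [CommRing R]

theorem sum_mul_det_updateCol (M : Matrix ι ι R) (b : ι → R) (r : ι) :
    ∑ m, M r m * (M.updateCol m b).det = M.det * b r := by
  simpa only [Matrix.mulVec, dotProduct, Matrix.cramer_apply, Pi.smul_apply, smul_eq_mul]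
    using congrFun (Matrix.mulVec_cramer M b) r

theorem det_eq_sum_det_updateCol_of_row_eq_one {M : Matrix ι ι R} {b : ι → R} {r : ι}
    (hM : ∀ m, M r m = 1) (hb : b r = 1) :
    M.det = ∑ m, (M.updateCol m b).det := by
  simpa only [hM, hb, one_mul, mul_one] using (sum_mul_det_updateCol M b r).symm

end Cramer

theorem of_update_eq_updateCol {ρ ι P R : Type*} [DecidableEq ι] (f : P → ρ → R)
    (W : ι → P) (m : ι) (O : P) :
    (Matrix.of fun r c => f (Function.update W m O c) r) =
      (Matrix.of fun r c => f (W c) r).updateCol m (f O) := by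
  ext r c
  simp only [Matrix.of_apply, Matrix.updateCol_apply, Function.update_apply]
  split_ifs <;> rfl

section Columns

variable {n : ℕ} {A : Type*}

/-- The column contributed by a point `p` to the matrix of `X_{i,jk}`: the vector `(p, 1)` with its
`i`-th coordinate replaced by `p_j p_k`. The coordinates may lie in any `A`, so that both the
variables of the polynomial ring and their values are covered. -/
def Xcol [Mul A] [One A] (i j k : Fin n) (p : Fin n → A) : Fin (n + 1) → A :=
  Function.update (Fin.snoc p 1) i.castSucc (p j * p k)

theorem Xcol_last [Mul A] [One A] (i j k : Fin n) (p : Fin n → A) :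
    Xcol i j k p (Fin.last n) = 1 := by
  rw [Xcol, Function.update_of_ne i.castSucc_ne_last.symm, Fin.snoc_last]

theorem map_Xcol {B F : Type*} [MulOneClass A] [MulOneClass B] [FunLike F A B]
    [MonoidHomClass F A B] (φ : F) (i j k : Fin n) (p : Fin n → A) (r : Fin (n + 1)) :
    φ (Xcol i j k p r) = Xcol i j k (fun a => φ (p a)) r := by
  induction r using Fin.lastCases with
  | last => simp only [Xcol_last, map_one]
  | cast a =>
    simp only [Xcol, Function.update_apply, Fin.snoc_castSucc]
    split_ifs
    · exact map_mul φ _ _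
    · rfl

theorem Xmat_apply (i j k : Fin n) (r c : Fin (n + 1)) :
    Xmat n i j k r c = Xcol i j k (fun a => MvPolynomial.X (a, c)) r := by
  induction r using Fin.lastCases with
  | last => simp [Xmat, Xcol_last, i.isLt.ne']
  | cast a => simp [Xmat, Xcol, Function.update_apply, Fin.ext_iff]

theorem aeval_Xpoly [CommRing A] [Algebra ℝ A] (i j k : Fin n) (W : Fin (n + 1) → Fin n → A) :
    MvPolynomial.aeval (fun v => W v.2 v.1) (Xpoly n i j k) =
      (Matrix.of fun r c => Xcol i j k (W c) r).det := by
  rw [Xpoly, AlgHom.map_det]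
  congr 1
  ext r c
  simp only [AlgHom.mapMatrix_apply, Matrix.map_apply, Matrix.of_apply, Xmat_apply,
    map_Xcol, MvPolynomial.aeval_X]

theorem Xpoly_eval_eq_sum_update_general [CommRing A] [Algebra ℝ A] (O : Fin n → A)
    (W : Fin (n + 1) → Fin n → A) (i j k : Fin n) :
    MvPolynomial.aeval (fun v => W v.2 v.1) (Xpoly n i j k) =
      ∑ m : Fin (n + 1),
        MvPolynomial.aeval (fun v => Function.update W m O v.2 v.1) (Xpoly n i j k) := by
  simp only [aeval_Xpoly, of_update_eq_updateCol]
  exact det_eq_sum_det_updateCol_of_row_eq_one (fun c => Xcol_last i j k (W c))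
    (Xcol_last i j k O)

end Columns

/-- Archimedes-type additivity of the basic determinants: replacing, in turn, each vertex
`W m` by the point `O` and summing recovers `X_{i,jk}(W_0, …, W_n)`. -/
theorem Xpoly_eval_eq_sum_update (n : ℕ) (hn : 1 ≤ n)
    (O : EuclideanSpace ℝ (Fin n)) (W : Fin (n+1) → EuclideanSpace ℝ (Fin n))
    (i j k : Fin n) :
    MvPolynomial.eval (fun v => W v.2 v.1) (Xpoly n i j k) =
      ∑ m : Fin (n+1),
        MvPolynomial.eval (fun v => Function.update W m O v.2 v.1) (Xpoly n i j k) := by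
  simpa only [MvPolynomial.aeval_eq_eval, Function.apply_update (fun _ => WithLp.ofLp)] using
    Xpoly_eval_eq_sum_update_general O.ofLp (fun m => (W m).ofLp) i j k
end

section
/- Let σ be a transposition of {1, …, n}, acting on polynomials in the variables x_i^j by the substitution x_i^j ↦ x_{σ(i)}^j. Then for all 1 ≤ i, j, k ≤ n, one has σ(X_{i,jk}) = −X_{σ(i),σ(j)σ(k)}. -/
/-!
Permuting the subscripts by `σ` permutes the first `n` rows of the matrix of `V` and fixes its last
row of ones. It carries the new `i`-th row of products `x_j x_k` to the new `σ(i)`-th row of products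
`x_{σ(j)} x_{σ(k)}`, so the two determinants differ by the sign of this row permutation,
which is the sign of `σ`.
-/

open Equiv.Perm Matrix MvPolynomial

section

variable {n : ℕ}

theorem viaFintypeEmbedding_castSuccEmb_castSucc (σ : Equiv.Perm (Fin n)) (r : Fin n) :
    σ.viaFintypeEmbedding Fin.castSuccEmb r.castSucc = (σ r).castSucc :=
  σ.viaFintypeEmbedding_apply_image Fin.castSuccEmb r

theorem viaFintypeEmbedding_castSuccEmb_last (σ : Equiv.Perm (Fin n)) :
    σ.viaFintypeEmbedding Fin.castSuccEmb (Fin.last n) = Fin.last n :=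
  σ.viaFintypeEmbedding_apply_notMem_range Fin.castSuccEmb (by simp)

theorem Vmat_castSucc (r : Fin n) (c : Fin (n + 1)) : Vmat n r.castSucc c = X (r, c) := by
  simp [Vmat]

theorem Vmat_last (c : Fin (n + 1)) : Vmat n (Fin.last n) c = 1 := by
  simp [Vmat]

theorem Xmat_eq_updateRow (i j k : Fin n) :
    Xmat n i j k = (Vmat n).updateRow i.castSucc fun c ↦ X (j, c) * X (k, c) := by
  ext1 r c
  simp [Xmat, Vmat, updateRow_apply, Fin.ext_iff]

theorem Vmat_map_rename (σ : Equiv.Perm (Fin n)) :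
    (Vmat n).map (rename (σ.prodCongr (Equiv.refl (Fin (n + 1))))) =
      (Vmat n).submatrix (σ.viaFintypeEmbedding Fin.castSuccEmb) id := by
  ext1 r c
  induction r using Fin.lastCases with
  | last => simp [Vmat_last, viaFintypeEmbedding_castSuccEmb_last]
  | cast r => simp [Vmat_castSucc, viaFintypeEmbedding_castSuccEmb_castSucc]

theorem Xmat_map_rename (σ : Equiv.Perm (Fin n)) (i j k : Fin n) :
    (Xmat n i j k).map (rename (σ.prodCongr (Equiv.refl (Fin (n + 1))))) =
      (Xmat n (σ i) (σ j) (σ k)).submatrix (σ.viaFintypeEmbedding Fin.castSuccEmb) id := by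
  set τ := σ.viaFintypeEmbedding Fin.castSuccEmb
  have renamed_row : rename (σ.prodCongr (Equiv.refl (Fin (n + 1)))) ∘
      (fun c ↦ X (j, c) * X (k, c) : Fin (n + 1) → MvPolynomial (Fin n × Fin (n + 1)) ℝ) =
        fun c ↦ X (σ j, c) * X (σ k, c) := by
    ext1 c
    simp
  calc (Xmat n i j k).map (rename (σ.prodCongr (Equiv.refl (Fin (n + 1)))))
      = ((Vmat n).submatrix τ id).updateRow i.castSucc fun c ↦ X (σ j, c) * X (σ k, c) := by
        rw [Xmat_eq_updateRow, map_updateRow, Vmat_map_rename, renamed_row]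
    _ = ((Vmat n).updateRow (τ i.castSucc) fun c ↦ X (σ j, c) * X (σ k, c)).submatrix τ id :=
        updateRow_submatrix_equiv _ _ _ τ (Equiv.refl _)
    _ = (Xmat n (σ i) (σ j) (σ k)).submatrix τ id := by
        rw [viaFintypeEmbedding_castSuccEmb_castSucc, Xmat_eq_updateRow]

theorem rename_swap_Xpoly_general (σ : Equiv.Perm (Fin n)) (i j k : Fin n) :
    rename (σ.prodCongr (Equiv.refl (Fin (n + 1)))) (Xpoly n i j k) =
      sign σ • Xpoly n (σ i) (σ j) (σ k) := by
  rw [Xpoly, AlgHom.map_det, AlgHom.mapMatrix_apply, Xmat_map_rename, det_permute,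
    viaFintypeEmbedding_sign, ← Xpoly, Units.smul_def, zsmul_eq_mul]

end

/-- For a transposition `σ` of the subscripts (coordinate indices), one has
`σ(X_{i,jk}) = − X_{σ(i),σ(j)σ(k)}`. -/
theorem rename_swap_Xpoly (n : ℕ) (hn : 1 ≤ n)
    (σ : Equiv.Perm (Fin n)) (hσ : σ.IsSwap) (i j k : Fin n) :
    MvPolynomial.rename (σ.prodCongr (Equiv.refl (Fin (n+1)))) (Xpoly n i j k) =
      - Xpoly n (σ i) (σ j) (σ k) := by
  rw [rename_swap_Xpoly_general, hσ.sign_eq, Units.neg_smul, one_smul]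
end

section
/- Suppose that for some transposition σ of {1, …, n}, applying to each y_ℓ the substitution x_i^j ↦ x_{σ(i)}^j yields −y_{σ(ℓ)}, for every ℓ ∈ {1, …, n}. Then the coefficients satisfy A_{i,jk}^ℓ = A_{σ(i),σ(j)σ(k)}^{σ(ℓ)} for all 1 ≤ i, j, k, ℓ ≤ n. -/
/-- The Kronecker delta. -/
def kron {n : ℕ} (a b : Fin n) : ℝ := if a = b then 1 else 0

/-- `y_ℓ = Σ_{i,j,k} A_{i,jk}^ℓ X_{i,jk}`. -/
noncomputable def ypoly (n : ℕ) (A : Fin n → Fin n → Fin n → Fin n → ℝ) (ℓ : Fin n) :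
    MvPolynomial (Fin n × Fin (n+1)) ℝ :=
  ∑ i : Fin n, ∑ j : Fin n, ∑ k : Fin n, A ℓ i j k • Xpoly n i j k

/-!
Let each of the `m` columns of a square matrix have its own disjoint set of variables, and let row
`r` hold the copies of one polynomial `p r`. The coefficient of the determinant at a monomial
`∏ c, x^(d c)`, with the factor `x^(d c)` in the `c`-th set of variables, is then the determinant of
the scalar matrix whose `(r, c)` entry is the coefficient of `p r` at `d c`.

The polynomial `X_{i,jk}` is such a determinant, with rows `x_1, …, x_n, 1` except that row `i` is
`x_j x_k`. At the diagonal monomial of `X_{i,jk}` the scalar matrix of `X_{a,bc}` is the identity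
if `a = i` and `{b, c} = {j, k}`, and has a zero row otherwise. Symmetric coefficients can
therefore be read off `y_ℓ`. Permuting the subscripts by `σ` permutes the rows of the determinant,
so it takes `X_{i,jk}` to `sign σ • X_{σ(i),σ(j)σ(k)}`.
-/

open MvPolynomial Finsupp

section Alternant

variable {m ι κ R : Type*} [Fintype m]

/-- The exponent of the monomial `∏ c, x^(d c)`, where the factor `x^(d c)` is taken in the `c`-th
copy `(·, c)` of the variables `ι`. -/
noncomputable def columnExponent (d : m → ι →₀ ℕ) : ι × m →₀ ℕ :=
  ∑ c, (d c).mapDomain (·, c)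

lemma columnExponent_apply (d : m → ι →₀ ℕ) (a : ι) (c : m) :
    columnExponent d (a, c) = d c a := by
  rw [columnExponent, finsetSum_apply, Finset.sum_eq_single c]
  · exact mapDomain_apply (Prod.mk_left_injective c) _ a
  · intro c' _ hc
    exact mapDomain_of_notMem_range _ _ fun ⟨_, h⟩ => hc (Prod.ext_iff.mp h).2
  · simp

lemma columnExponent_injective :
    Function.Injective (columnExponent : (m → ι →₀ ℕ) → ι × m →₀ ℕ) := by
  intro d e h
  ext c a
  rw [← columnExponent_apply d, h, columnExponent_apply]

lemma coeff_columnExponent_prod_rename [CommSemiring R] (d : m → ι →₀ ℕ)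
    (q : m → MvPolynomial ι R) :
    coeff (columnExponent d) (∏ c, rename (·, c) (q c)) = ∏ c, coeff (d c) (q c) := by
  classical
  have coeff_monomials (u : m → ι →₀ ℕ) (a : m → R) :
      coeff (columnExponent d) (∏ c, rename (·, c) (monomial (u c) (a c))) =
        ∏ c, coeff (d c) (monomial (u c) (a c)) := by
    simp only [rename_monomial, ← monomial_sum_prod, coeff_monomial, Fintype.prod_ite_zero]
    exact if_congr (columnExponent_injective.eq_iff.trans funext_iff) rfl rfl
  conv_lhs => enter [2, 2, c]; rw [(q c).as_sum, map_sum]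
  conv_rhs => enter [2, c]; rw [(q c).as_sum, coeff_sum]
  simp only [Finset.prod_univ_sum, coeff_sum, coeff_monomials]

variable [DecidableEq m] [CommRing R]

/-- The determinant whose entry in row `r` and column `c` is the polynomial `p r` in the `c`-th copy
`(·, c)` of the variables `ι`; for powers of a single variable this is a classical alternant. -/
noncomputable def alternant (p : m → MvPolynomial ι R) : MvPolynomial (ι × m) R :=
  (Matrix.of fun r c => rename (·, c) (p r)).det

lemma rename_alternant (f : ι → κ) (p : m → MvPolynomial ι R) :
    rename (Prod.map f id) (alternant p) = alternant fun r => rename f (p r) := by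
  rw [alternant, AlgHom.map_det, alternant]
  congr 1
  ext1 r c
  simp [rename_rename, Function.comp_def]

lemma alternant_comp_perm (τ : Equiv.Perm m) (p : m → MvPolynomial ι R) :
    alternant (p ∘ τ) = Equiv.Perm.sign τ • alternant p := by
  rw [Units.smul_def, zsmul_eq_mul]
  exact Matrix.det_permute τ (Matrix.of fun r c => rename (·, c) (p r))

lemma coeff_columnExponent_alternant (d : m → ι →₀ ℕ) (p : m → MvPolynomial ι R) :
    coeff (columnExponent d) (alternant p) = (Matrix.of fun r c => coeff (d c) (p r)).det := by
  simp only [alternant, Matrix.det_apply, Matrix.of_apply, Units.smul_def, coeff_sum, coeff_smul,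
    fun τ : Equiv.Perm m => coeff_columnExponent_prod_rename d fun c => p (τ c)]

end Alternant

section Simplex

variable {n : ℕ}

/-- The exponents of the rows `x_1, …, x_n, 1` of `X_{i,jk}`, where row `i` is `x_j x_k` instead of
`x_i`. -/
noncomputable def rowExponent (i j k : Fin n) : Fin (n + 1) → Fin n →₀ ℕ :=
  Fin.snoc (Function.update (fun r => single r 1) i (single j 1 + single k 1)) 0

lemma rowExponent_last (i j k : Fin n) : rowExponent i j k (Fin.last n) = 0 :=
  Fin.snoc_last ..

lemma rowExponent_castSucc_self (i j k : Fin n) :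
    rowExponent i j k i.castSucc = single j 1 + single k 1 := by
  simp [rowExponent]

lemma rowExponent_castSucc_of_ne {i r : Fin n} (h : r ≠ i) (j k : Fin n) :
    rowExponent i j k r.castSucc = single r 1 := by
  simp [rowExponent, h]

lemma rowExponent_comm (i j k : Fin n) : rowExponent i j k = rowExponent i k j := by
  simp only [rowExponent, add_comm]

lemma rowExponent_eq_single_add_single_iff {i j k j' k' : Fin n} {r : Fin (n + 1)} :
    rowExponent i j k r = single j' 1 + single k' 1 ↔
      r = i.castSucc ∧ (j = j' ∧ k = k' ∨ j = k' ∧ k = j') := by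
  induction r using Fin.lastCases with
  | last =>
    refine iff_of_false (fun h => ?_) fun h => (Fin.castSucc_ne_last i).symm h.1
    simpa [rowExponent_last] using congrArg degree h
  | cast r =>
    obtain rfl | hr := eq_or_ne r i
    · simp [rowExponent_castSucc_self, single_add_single_eq_single_add_single]
    · refine iff_of_false (fun h => ?_) fun h => hr (Fin.castSucc_injective n h.1)
      simpa [rowExponent_castSucc_of_ne hr] using congrArg degree h

lemma rowExponent_eq_single_iff {i j k s : Fin n} {r : Fin (n + 1)} :
    rowExponent i j k r = single s 1 ↔ s ≠ i ∧ r = s.castSucc := by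
  induction r using Fin.lastCases with
  | last =>
    refine iff_of_false (fun h => ?_) fun h => (Fin.castSucc_ne_last s).symm h.2
    simpa [rowExponent_last] using congrArg degree h
  | cast r =>
    obtain rfl | hr := eq_or_ne r i
    · refine iff_of_false (fun h => ?_) fun h => h.1 (Fin.castSucc_injective n h.2).symm
      simpa [rowExponent_castSucc_self] using congrArg degree h
    · rw [rowExponent_castSucc_of_ne hr, single_left_inj one_ne_zero, Fin.castSucc_inj]
      exact ⟨fun h => ⟨h ▸ hr, h⟩, And.right⟩

lemma rowExponent_eq_zero_iff {i j k : Fin n} {r : Fin (n + 1)} :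
    rowExponent i j k r = 0 ↔ r = Fin.last n := by
  induction r using Fin.lastCases with
  | last => simp [rowExponent_last]
  | cast r =>
    obtain rfl | hr := eq_or_ne r i
    · simp [rowExponent_castSucc_self]
    · simp [rowExponent_castSucc_of_ne hr]

lemma rowExponent_injective (i j k : Fin n) : Function.Injective (rowExponent i j k) := by
  intro r s h
  induction s using Fin.lastCases with
  | last => exact rowExponent_eq_zero_iff.mp (h.trans (rowExponent_last ..))
  | cast s =>
    obtain rfl | hs := eq_or_ne s i
    · rw [rowExponent_castSucc_self] at h
      exact (rowExponent_eq_single_add_single_iff.mp h).1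
    · rw [rowExponent_castSucc_of_ne hs] at h
      exact (rowExponent_eq_single_iff.mp h).2

lemma Xpoly_eq_alternant (i j k : Fin n) :
    Xpoly n i j k = alternant fun r => monomial (rowExponent i j k r) 1 := by
  rw [Xpoly, alternant]
  congr 1
  ext1 r c
  induction r using Fin.lastCases with
  | last => simp [Xmat, rowExponent_last, i.isLt.ne']
  | cast r =>
    by_cases h : r = i
    · subst h
      simp [Xmat, rowExponent_castSucc_self, X, monomial_mul, rename_monomial, mapDomain_add]
    · simp [Xmat, rowExponent_castSucc_of_ne h, Fin.val_ne_of_ne h, X, rename_monomial]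

lemma mapDomain_rowExponent (σ : Equiv.Perm (Fin n)) (i j k : Fin n) (r : Fin (n + 1)) :
    (rowExponent i j k r).mapDomain σ =
      rowExponent (σ i) (σ j) (σ k) (σ.viaFintypeEmbedding Fin.castSuccEmb r) := by
  induction r using Fin.lastCases with
  | last =>
    rw [Equiv.Perm.viaFintypeEmbedding_apply_notMem_range _ _ (by simp)]
    simp only [rowExponent_last, mapDomain_zero]
  | cast r =>
    rw [← Fin.coe_castSuccEmb, Equiv.Perm.viaFintypeEmbedding_apply_image, Fin.coe_castSuccEmb]
    obtain rfl | hr := eq_or_ne r i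
    · simp only [rowExponent_castSucc_self, mapDomain_add, mapDomain_single]
    · simp only [rowExponent_castSucc_of_ne hr, rowExponent_castSucc_of_ne (σ.injective.ne hr),
        mapDomain_single]

lemma rename_Xpoly (σ : Equiv.Perm (Fin n)) (i j k : Fin n) :
    rename (σ.prodCongr (Equiv.refl (Fin (n + 1)))) (Xpoly n i j k) =
      Equiv.Perm.sign σ • Xpoly n (σ i) (σ j) (σ k) := by
  calc rename (Prod.map σ id) (Xpoly n i j k)
      = alternant ((fun r => monomial (rowExponent (σ i) (σ j) (σ k) r) 1) ∘
          σ.viaFintypeEmbedding Fin.castSuccEmb) := by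
        simp only [Xpoly_eq_alternant, rename_alternant, rename_monomial, mapDomain_rowExponent,
          Function.comp_def]
    _ = Equiv.Perm.sign σ • Xpoly n (σ i) (σ j) (σ k) := by
        rw [alternant_comp_perm, Equiv.Perm.viaFintypeEmbedding_sign, Xpoly_eq_alternant]

lemma coeff_Xpoly (i j k i' j' k' : Fin n) :
    coeff (columnExponent (rowExponent i j k)) (Xpoly n i' j' k') =
      if i' = i ∧ (j' = j ∧ k' = k ∨ j' = k ∧ k' = j) then 1 else 0 := by
  simp only [Xpoly_eq_alternant, coeff_columnExponent_alternant, coeff_monomial]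
  by_cases hjk : j' = j ∧ k' = k ∨ j' = k ∧ k' = j
  · obtain rfl | hi := eq_or_ne i' i
    · have hrow : rowExponent i' j' k' = rowExponent i' j k := by
        obtain ⟨rfl, rfl⟩ | ⟨rfl, rfl⟩ := hjk
        exacts [rfl, rowExponent_comm ..]
      simp only [hrow, (rowExponent_injective i' j k).eq_iff, hjk, and_self, if_true]
      exact Matrix.det_one
    · rw [if_neg (by tauto)]
      refine Matrix.det_eq_zero_of_row_eq_zero i.castSucc fun c => if_neg ?_
      rw [rowExponent_castSucc_of_ne hi.symm, eq_comm, rowExponent_eq_single_iff]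
      exact fun h => h.1 rfl
  · rw [if_neg (by tauto)]
    refine Matrix.det_eq_zero_of_row_eq_zero i'.castSucc fun c => if_neg fun h => ?_
    rw [rowExponent_castSucc_self, eq_comm, rowExponent_eq_single_add_single_iff] at h
    tauto

lemma coeff_ypoly (A : Fin n → Fin n → Fin n → Fin n → ℝ) (ℓ i j k : Fin n) :
    coeff (columnExponent (rowExponent i j k)) (ypoly n A ℓ) =
      if j = k then A ℓ i j k else A ℓ i j k + A ℓ i k j := by
  simp only [ypoly, coeff_sum, coeff_smul, coeff_Xpoly, smul_eq_mul, mul_ite, mul_one, mul_zero]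
  split_ifs with hjk
  · subst hjk
    simp [ite_and]
  · have split_pairs (i' j' k' : Fin n) :
        (if i' = i ∧ (j' = j ∧ k' = k ∨ j' = k ∧ k' = j) then A ℓ i' j' k' else 0) =
          (if i' = i ∧ j' = j ∧ k' = k then A ℓ i' j' k' else 0) +
            if i' = i ∧ j' = k ∧ k' = j then A ℓ i' j' k' else 0 := by
      grind
    simp [split_pairs, ite_and, Finset.sum_add_distrib]

lemma ypoly_eq_ypoly_iff {A B : Fin n → Fin n → Fin n → Fin n → ℝ} {ℓ ℓ' : Fin n}
    (hA : ∀ i j k, A ℓ i j k = A ℓ i k j) (hB : ∀ i j k, B ℓ' i j k = B ℓ' i k j) :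
    ypoly n A ℓ = ypoly n B ℓ' ↔ A ℓ = B ℓ' := by
  refine ⟨fun h => ?_, fun h => by simp only [ypoly, h]⟩
  ext i j k
  have hc := congrArg (coeff (columnExponent (rowExponent i j k))) h
  rw [coeff_ypoly, coeff_ypoly, ← hA i j k, ← hB i j k] at hc
  split_ifs at hc <;> linarith

/-- The coefficients `A_{i,jk}^ℓ` with all four indices permuted by `σ`; the inverse makes this a
left action of permutations. -/
def permuteIndices (σ : Equiv.Perm (Fin n)) (A : Fin n → Fin n → Fin n → Fin n → ℝ) :
    Fin n → Fin n → Fin n → Fin n → ℝ :=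
  fun ℓ i j k => A (σ.symm ℓ) (σ.symm i) (σ.symm j) (σ.symm k)

lemma rename_ypoly (σ : Equiv.Perm (Fin n)) (A : Fin n → Fin n → Fin n → Fin n → ℝ) (ℓ : Fin n) :
    rename (σ.prodCongr (Equiv.refl (Fin (n + 1)))) (ypoly n A ℓ) =
      Equiv.Perm.sign σ • ypoly n (permuteIndices σ A) (σ ℓ) := by
  simp only [ypoly, map_sum, map_smul, rename_Xpoly, Finset.smul_sum,
    smul_comm _ (Equiv.Perm.sign σ)]
  refine Fintype.sum_equiv σ _ _ fun i => Fintype.sum_equiv σ _ _ fun j =>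
    Fintype.sum_equiv σ _ _ fun k => ?_
  simp only [permuteIndices, Equiv.symm_apply_apply]

theorem coeff_transposition_covariance_general {A : Fin n → Fin n → Fin n → Fin n → ℝ}
    (hA : ∀ ℓ i j k, A ℓ i j k = A ℓ i k j) (σ : Equiv.Perm (Fin n)) (ℓ : Fin n) :
    rename (σ.prodCongr (Equiv.refl (Fin (n + 1)))) (ypoly n A ℓ) =
        Equiv.Perm.sign σ • ypoly n A (σ ℓ) ↔
      ∀ i j k, A ℓ i j k = A (σ ℓ) (σ i) (σ j) (σ k) := by
  have hσA (i j k : Fin n) :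
      permuteIndices σ A (σ ℓ) i j k = permuteIndices σ A (σ ℓ) i k j := hA ..
  rw [rename_ypoly, smul_left_cancel_iff, ypoly_eq_ypoly_iff hσA (hA (σ ℓ))]
  refine ⟨fun h i j k => ?_, fun h => ?_⟩
  · simpa only [permuteIndices, Equiv.symm_apply_apply] using congr_fun₃ h (σ i) (σ j) (σ k)
  · ext i j k
    simp only [permuteIndices, Equiv.symm_apply_apply, h, Equiv.apply_symm_apply]

end Simplex

/-- If for some transposition `σ` of the subscripts the substitution `x_i^j ↦ x_{σ(i)}^j`
sends each `y_ℓ` to `−y_{σ(ℓ)}`, then `A_{i,jk}^ℓ = A_{σ(i),σ(j)σ(k)}^{σ(ℓ)}`. -/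
theorem coeff_transposition_covariance (n : ℕ) (hn : 1 ≤ n)
    (A : Fin n → Fin n → Fin n → Fin n → ℝ)
    (hA : ∀ ℓ i j k, A ℓ i j k = A ℓ i k j)
    (σ : Equiv.Perm (Fin n)) (hσ : σ.IsSwap)
    (hy : ∀ ℓ : Fin n,
      MvPolynomial.rename (σ.prodCongr (Equiv.refl (Fin (n+1)))) (ypoly n A ℓ) =
        - ypoly n A (σ ℓ)) :
    ∀ ℓ i j k, A ℓ i j k = A (σ ℓ) (σ i) (σ j) (σ k) := by
  intro ℓ
  refine (coeff_transposition_covariance_general hA σ ℓ).mp ?_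
  rw [hy, hσ.sign_eq, Units.neg_smul, one_smul]
end
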